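/- arXiv:1212.5324 — 3 statements merged into one kernel-verified Lean document; each statement's English description precedes it below -/
import Mathlib

section
/- Let k, n ≥ 1 be integers and let 0 ≤ ρ ≤ 1 − 1/(2k). In the polynomial ring ℝ[{F_x : x ∈ {−1,1}ⁿ} ∪ {G_x : x ∈ {−1,1}ⁿ}], the polynomial 4^{−n} Σ_{x,y ∈ {−1,1}ⁿ} (∏_{i=1}^{n} (1 + ρ xᵢ yᵢ)) · F_x^{2k} G_y^{2k} − (2^{−n} Σ_{x} F_x)^{2k} · (2^{−n} Σ_{y} G_y)^{2k} is a sum of squares of polynomials, each of degree at most 2k. -/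
/-!
The two expectations tensorise over the coordinates of the cube: splitting off one coordinate
expresses the difference for `n + 1` as a nonnegative combination of differences for `n` plus the
difference for `n = 1`, evaluated at four conditional means (`corr_sub_mem_sosCone`). Everything
therefore reduces to the two-point inequality `two_point` for four polynomials `F₁, F₀, G₁, G₀` of
degree at most `1`.

The two-point difference is affine in `ρ`, so it is enough to treat `ρ = 0`, where it factors
through the one-variable power mean inequality, and `ρ = 1 - 1 / (2k)`. For the latter write
`F = μ ± a`, `G = ν ∓ b`, and put `v = μν`, `t = ab`, `d = aν - bμ`. If `pq c w n` denotes the pair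
`(P, Q)` with `(c + y) ^ n = P + y Q` and `w = y ^ 2`, then `4k` times the difference equals

`(4k - 1) P(v - t, d²) + P(v + t, d² + 4tv) - 4k v^(2k)`,   with exponent `n = 2k`.

This is a polynomial in `s = d²` whose coefficients are binary forms in `(v, t)`. The key point is
that each of these forms is nonnegative; dehomogenised at `v = 1` they are the coefficients of
`twoPoint k`, and nonnegativity is `twoPoint_coeff_nonneg`.
* The constant coefficient reduces to `M ((1 - t) ^ M - 1) + t J ^ 2 ≥ 0` with `M = 2k` and `J` the
  second entry of `pq 1 t M` (`const_coeff_nonneg`).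
* A higher coefficient is clear for `t ≥ 0`. For `t ≤ 0` the coefficients of `P(1 + t, s + 4t)` are
  bounded in absolute value by those of `P(1 - t, s)` (`pq_majorant`).

A nonnegative univariate polynomial is a sum of two squares (`exists_two_squares`), and
homogenising these squares gives the explicit certificate `twoPoint_sos`, in which the square roots
have degree at most `k` in `v, t, d` when `d` has weight `1`, hence degree at most `2k` in the
original variables.
-/

open MvPolynomial

/-- The point of the cube `{−1,1}` encoded by a Boolean. -/
def sgn (b : Bool) : ℝ := if b then 1 else -1

open scoped Polynomial

namespace Polynomial

/-! ### Nonnegative univariate real polynomials -/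

/-- A univariate real polynomial that is nonnegative on `ℝ` is a sum of two squares of polynomials
of at most half its degree. The induction bound `N` only serves the strong induction on the degree:
a complex root gives a factor `(X - u)² + v²` with nonnegative cofactor, and the product of two sums
of two squares is again one by the Brahmagupta–Fibonacci identity. -/
theorem exists_two_squares : ∀ (N : ℕ) (p : ℝ[X]), p.natDegree ≤ N → (∀ x, 0 ≤ p.eval x) →
    ∃ q r : ℝ[X], p = q ^ 2 + r ^ 2 ∧ 2 * q.natDegree ≤ p.natDegree ∧
      2 * r.natDegree ≤ p.natDegree := by
  intro N
  induction N using Nat.strong_induction_on with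
  | _ N ih =>
  intro p hN hp
  rcases Nat.eq_zero_or_pos p.natDegree with h0 | hpos
  · obtain ⟨a, rfl⟩ := natDegree_eq_zero.mp h0
    have ha : 0 ≤ a := by simpa using hp 0
    refine ⟨C (√a), 0, ?_, by simp, by simp⟩
    rw [← C_pow, Real.sq_sqrt ha]; simp
  -- the induction step, once a factor `(X - u)² + v²` with nonnegative cofactor is known
  have key : ∀ u v : ℝ, (X - C u) ^ 2 + C v ^ 2 ∣ p →
      (∀ g : ℝ[X], p = ((X - C u) ^ 2 + C v ^ 2) * g → ∀ x, 0 ≤ g.eval x) →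
      ∃ q r : ℝ[X], p = q ^ 2 + r ^ 2 ∧ 2 * q.natDegree ≤ p.natDegree ∧
        2 * r.natDegree ≤ p.natDegree := by
    rintro u v ⟨g, hg⟩ hnn
    have hd : ((X - C u) ^ 2 + C v ^ 2 : ℝ[X]).natDegree = 2 := by
      rw [← C_pow, natDegree_add_C, natDegree_pow, natDegree_X_sub_C]
    have hp0 : p ≠ 0 := by rintro rfl; simp at hpos
    have hg0 : g ≠ 0 := by rintro rfl; simp at hg; exact hp0 hg
    have hf0 : ((X - C u) ^ 2 + C v ^ 2 : ℝ[X]) ≠ 0 := by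
      intro h; rw [h] at hd; simp at hd
    have hdeg : p.natDegree = 2 + g.natDegree := by
      rw [hg, natDegree_mul hf0 hg0, hd]
    obtain ⟨q, r, h1, h2, h3⟩ := ih g.natDegree (by omega) g le_rfl (hnn g hg)
    have hX : (X - C u).natDegree ≤ 1 := by rw [natDegree_X_sub_C]
    have hC : (C v : ℝ[X]).natDegree ≤ 0 := by simp
    refine ⟨(X - C u) * q + C v * r, (X - C u) * r - C v * q, ?_, ?_, ?_⟩
    · rw [hg, h1]; ring
    · have a1 := natDegree_mul_le (p := X - C u) (q := q)
      have a2 := natDegree_mul_le (p := C v) (q := r)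
      have := natDegree_add_le ((X - C u) * q) (C v * r)
      omega
    · have a1 := natDegree_mul_le (p := X - C u) (q := r)
      have a2 := natDegree_mul_le (p := C v) (q := q)
      have := natDegree_sub_le ((X - C u) * r) (C v * q)
      omega
  obtain ⟨z, hz⟩ : ∃ z : ℂ, aeval z p = 0 := by
    obtain ⟨z, hz⟩ := Complex.exists_root (f := p.map (algebraMap ℝ ℂ)) (by
      rw [degree_map]; exact natDegree_pos_iff_degree_pos.mp hpos)
    exact ⟨z, by simpa [IsRoot, eval_map_algebraMap] using hz⟩
  by_cases him : z.im = 0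
  · have hzr : p.IsRoot z.re := by
      have : z = algebraMap ℝ ℂ z.re := by
        apply Complex.ext <;> simp [him]
      rw [this, aeval_algebraMap_apply] at hz
      simpa using hz
    -- `z.re` minimises `p`, so it is a double root
    have hder : p.derivative.IsRoot z.re := by
      have hmin : IsLocalMin (fun x => p.eval x) z.re :=
        Filter.Eventually.of_forall fun x => by
          have := hp x
          simpa [hzr.eq_zero] using this
      have := hmin.deriv_eq_zero
      simpa using this
    have hp0 : p ≠ 0 := by rintro rfl; simp at hpos
    have hm := (one_lt_rootMultiplicity_iff_isRoot hp0).mpr ⟨hzr, hder⟩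
    have hdvd : (X - C z.re) ^ 2 ∣ p := (le_rootMultiplicity_iff hp0).mp hm
    refine key z.re 0 (by simpa using hdvd) ?_
    intro g hg
    have hne : ∀ x, x ≠ z.re → 0 ≤ g.eval x := by
      intro x hx
      have h := hp x
      rw [hg] at h
      simp only [eval_mul, eval_add, eval_pow, eval_sub, eval_X, eval_C] at h
      have : 0 < (x - z.re) ^ 2 + 0 ^ 2 := by
        have := sub_ne_zero.mpr hx
        positivity
      exact nonneg_of_mul_nonneg_right h this
    -- the cofactor is nonnegative off its possible zero `z.re`, hence everywhere by continuity
    have hcl : IsClosed {x | 0 ≤ g.eval x} := isClosed_le continuous_const g.continuous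
    have hdense : Dense {x : ℝ | x ≠ z.re} := dense_compl_singleton z.re
    have huniv := hdense.closure_eq ▸ closure_minimal (fun x hx => hne x hx) hcl
    exact fun x => huniv (Set.mem_univ x)
  · have hdvd := quadratic_dvd_of_aeval_eq_zero_im_ne_zero p hz him
    have e : (X ^ 2 - C (2 * z.re) * X + C (‖z‖ ^ 2) : ℝ[X]) = (X - C z.re) ^ 2 + C z.im ^ 2 := by
      rw [Complex.sq_norm, Complex.normSq_apply]
      simp only [map_add, map_mul, map_ofNat]; ring
    refine key z.re z.im (e ▸ hdvd) ?_
    intro g hg x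
    have h := hp x
    rw [hg] at h
    simp only [eval_mul, eval_add, eval_pow, eval_sub, eval_X, eval_C] at h
    have : 0 < (x - z.re) ^ 2 + z.im ^ 2 := by positivity
    exact nonneg_of_mul_nonneg_right h this

end Polynomial

/-! ### Rational and irrational part of a power -/

/-- The pair `(P, Q)` with `(c + y) ^ n = P + y * Q`, as a polynomial in `c` and `w = y ^ 2`:
formally, the rational and irrational part of `(c + √w) ^ n`. -/
def pq {R : Type*} [CommRing R] (c w : R) : ℕ → R × R
  | 0 => (1, 0)
  | n + 1 => (c * (pq c w n).1 + w * (pq c w n).2, (pq c w n).1 + c * (pq c w n).2)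

section PQ
variable {R S : Type*} [CommRing R] [CommRing S]

theorem pq_succ_fst (c w : R) (n : ℕ) :
    (pq c w (n + 1)).1 = c * (pq c w n).1 + w * (pq c w n).2 := rfl

theorem pq_succ_snd (c w : R) (n : ℕ) :
    (pq c w (n + 1)).2 = (pq c w n).1 + c * (pq c w n).2 := rfl

theorem add_pow_eq_pq (c y : R) (n : ℕ) :
    (c + y) ^ n = (pq c (y ^ 2) n).1 + y * (pq c (y ^ 2) n).2 := by
  induction n with
  | zero => simp [pq]
  | succ n ih => rw [pow_succ, ih, pq_succ_fst, pq_succ_snd]; ring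

theorem add_pow_add_sub_pow (c y : R) (n : ℕ) :
    (c + y) ^ n + (c - y) ^ n = 2 * (pq c (y ^ 2) n).1 := by
  have h1 := add_pow_eq_pq c y n
  have h2 := add_pow_eq_pq c (-y) n
  rw [neg_sq, ← sub_eq_add_neg] at h2
  rw [h1, h2]; ring

theorem map_pq_fst (f : R →+* S) (c w : R) (n : ℕ) :
    f (pq c w n).1 = (pq (f c) (f w) n).1 := by
  suffices h : f (pq c w n).1 = (pq (f c) (f w) n).1 ∧ f (pq c w n).2 = (pq (f c) (f w) n).2 from
    h.1
  induction n with
  | zero => simp [pq]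
  | succ n ih => simp [pq_succ_fst, pq_succ_snd, ih.1, ih.2]

/-- `P` is homogeneous of degree `n` when `c` has weight `1` and `w` has weight `2`. -/
theorem pq_smul_fst (l c w : R) (n : ℕ) :
    (pq (l * c) (l ^ 2 * w) n).1 = l ^ n * (pq c w n).1 := by
  suffices h : (pq (l * c) (l ^ 2 * w) n).1 = l ^ n * (pq c w n).1 ∧
      l * (pq (l * c) (l ^ 2 * w) n).2 = l ^ n * (pq c w n).2 from h.1
  induction n with
  | zero => simp [pq]
  | succ n ih =>
    obtain ⟨h1, h2⟩ := ih
    simp only [pq_succ_fst, pq_succ_snd]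
    constructor
    · linear_combination l * c * h1 + l * w * h2
    · linear_combination l * h1 + l * c * h2

theorem pq_zero_fst (c : R) (n : ℕ) : (pq c 0 n).1 = c ^ n := by
  induction n with
  | zero => simp [pq]
  | succ n ih => rw [pq_succ_fst, ih]; ring

theorem pq_two_fst (c w : R) (n : ℕ) : (pq c w (n + 2)).1 =
    (c ^ 2 + w) * (pq c w n).1 + 2 * w * (c * (pq c w n).2) := by
  simp only [pq_succ_fst, pq_succ_snd]; ring

theorem pq_two_snd (c w : R) (n : ℕ) : c * (pq c w (n + 2)).2 =
    (c ^ 2 + w) * (c * (pq c w n).2) + 2 * c ^ 2 * (pq c w n).1 := by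
  simp only [pq_succ_fst, pq_succ_snd]; ring

end PQ

/-- The identity `(1 + t + 2 √t) ^ n = ((1 + √t) ^ n) ^ 2`, split into its two parts. -/
theorem pq_square (t : ℝ) (n : ℕ) :
    (pq (1 + t) (4 * t) n).1 = (pq 1 t n).1 ^ 2 + t * (pq 1 t n).2 ^ 2 ∧
    (pq (1 + t) (4 * t) n).2 = (pq 1 t n).1 * (pq 1 t n).2 := by
  induction n with
  | zero => simp [pq]
  | succ n ih =>
    simp only [pq_succ_fst, pq_succ_snd, ih.1, ih.2]
    constructor <;> ring

/-- Multiplicativity of the norm `r ^ 2 - t * j ^ 2` of `r + j √t`. -/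
theorem pq_norm (t : ℝ) (n : ℕ) :
    (pq 1 t n).1 ^ 2 - t * (pq 1 t n).2 ^ 2 = (1 - t) ^ n := by
  induction n with
  | zero => simp [pq]
  | succ n ih =>
    simp only [pq_succ_fst, pq_succ_snd, pow_succ (1 - t), ← ih]
    ring

/-- With `t = -τ²` this says `(Im z ^ n) ^ 2 ≤ n * (|z ^ n| ^ 2 - 1)` for `z = 1 + i τ`. -/
theorem pq_im_bound {t : ℝ} (ht : t ≤ 0) (n : ℕ) :
    -t * (pq 1 t n).2 ^ 2 ≤ n * ((1 - t) ^ n - 1) := by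
  induction n with
  | zero => simp [pq]
  | succ n ih =>
    rcases Nat.eq_zero_or_pos n with rfl | hn
    · simp [pq]
    have hN := pq_norm t n
    set r := (pq 1 t n).1
    set j := (pq 1 t n).2
    have hn' : (0 : ℝ) < n := by exact_mod_cast hn
    -- Cauchy–Schwarz with the weights `1` and `n`, whose squared length is `n + 1`
    have hc : (r + j) ^ 2 ≤ (n + 1) * (r ^ 2 + j ^ 2 / n) := by
      have : (n + 1) * (r ^ 2 + j ^ 2 / n) - (r + j) ^ 2 = (n * r - j) ^ 2 / n := by
        field_simp; ring
      have : 0 ≤ (n * r - j) ^ 2 / n := by positivity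
      linarith
    have hr : r ^ 2 ≤ (1 - t) ^ n := by nlinarith [sq_nonneg j]
    have hj : -t * (j ^ 2 / n) ≤ (1 - t) ^ n - 1 := by
      rw [← mul_div_assoc, div_le_iff₀ hn']; linarith
    rw [pq_succ_snd, one_mul]
    push_cast
    calc -t * (r + j) ^ 2 ≤ -t * ((n + 1) * (r ^ 2 + j ^ 2 / n)) :=
          mul_le_mul_of_nonneg_left hc (by linarith)
      _ = (n + 1) * (-t * r ^ 2 + -t * (j ^ 2 / n)) := by ring
      _ ≤ (n + 1) * (-t * (1 - t) ^ n + ((1 - t) ^ n - 1)) := by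
          have := mul_le_mul_of_nonneg_left hr (by linarith : 0 ≤ -t)
          gcongr
      _ = (n + 1) * ((1 - t) ^ (n + 1) - 1) := by ring

theorem pq_ge {t : ℝ} (ht : 0 ≤ t) (n : ℕ) : 1 ≤ (pq 1 t n).1 ∧ (n : ℝ) ≤ (pq 1 t n).2 := by
  induction n with
  | zero => simp [pq]
  | succ n ih =>
    have hn : (0 : ℝ) ≤ n := n.cast_nonneg
    have := mul_nonneg ht (hn.trans ih.2)
    simp only [pq_succ_fst, pq_succ_snd]
    push_cast
    constructor <;> linarith [ih.1, ih.2]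

/-- The constant coefficient in `s` of the two-point polynomial, at `v = 1`, is nonnegative. -/
theorem const_coeff_nonneg {k : ℕ} (hk : 1 ≤ k) (t : ℝ) :
    0 ≤ (4 * k - 1) * (1 - t) ^ (2 * k) + (pq (1 + t) (4 * t) (2 * k)).1 - 4 * k := by
  have hN := pq_norm t (2 * k)
  rw [(pq_square t _).1]
  -- with `r, j` the entries of `pq 1 t (2 * k)`, `r ^ 2 = (1 - t) ^ (2 * k) + t * j ^ 2` turns the
  -- expression into twice the following one
  suffices h : 0 ≤ 2 * k * ((1 - t) ^ (2 * k) - 1) + t * (pq 1 t (2 * k)).2 ^ 2 by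
    linarith
  have hk' : (1 : ℝ) ≤ k := by exact_mod_cast hk
  rcases le_total t 0 with ht | ht
  · have := pq_im_bound ht (2 * k)
    push_cast at this
    linarith
  · have hb : 1 - 2 * k * t ≤ (1 - t) ^ (2 * k) := by
      rcases le_or_gt t 2 with h2 | h2
      · have := one_add_mul_le_pow (a := -t) (by linarith) (2 * k)
        push_cast at this
        rw [← sub_eq_add_neg] at this
        linarith
      · have : 0 ≤ (1 - t) ^ (2 * k) := (even_two_mul k).pow_nonneg _
        nlinarith
    have hj := (pq_ge ht (2 * k)).2
    push_cast at hj
    -- here `t * j ^ 2 ≥ 4 k² t` outweighs the loss `2 k * (2 k t)` in Bernoulli's inequality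
    have hj2 : (2 * k : ℝ) ^ 2 ≤ (pq 1 t (2 * k)).2 ^ 2 := by gcongr
    nlinarith [mul_le_mul_of_nonneg_left hj2 ht]


/-- For even exponent `P` is a polynomial in `c ^ 2` and `w` with natural coefficients, so it stays
in any subsemiring containing these, even if `c` itself does not belong to it. -/
theorem pq_even_mem {R : Type*} [CommRing R] (S : Subsemiring R) {c w : R} (hc : c ^ 2 ∈ S)
    (hw : w ∈ S) (m : ℕ) : (pq c w (2 * m)).1 ∈ S ∧ c * (pq c w (2 * m)).2 ∈ S := by
  have h2 : (2 : R) ∈ S := by exact_mod_cast natCast_mem S 2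
  induction m with
  | zero => simp [pq, S.one_mem, S.zero_mem]
  | succ m ih =>
    rw [mul_add, mul_one, pq_two_fst, pq_two_snd]
    exact ⟨S.add_mem (S.mul_mem (S.add_mem hc hw) ih.1) (S.mul_mem (S.mul_mem h2 hw) ih.2),
      S.add_mem (S.mul_mem (S.add_mem hc hw) ih.2) (S.mul_mem (S.mul_mem h2 hc) ih.1)⟩

/-! ### The two-point polynomial and its coefficients -/

namespace Polynomial

/-- The real polynomials all of whose coefficients are nonnegative. -/
def nonnegCoeff : Subsemiring ℝ[X] where
  carrier := {p | ∀ i, 0 ≤ p.coeff i}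
  mul_mem' {p q} hp hq i := by
    rw [coeff_mul]
    exact Finset.sum_nonneg fun x _ => mul_nonneg (hp _) (hq _)
  one_mem' i := by rw [coeff_one]; split_ifs <;> norm_num
  add_mem' {p q} hp hq i := by rw [coeff_add]; exact add_nonneg (hp _) (hq _)
  zero_mem' i := by simp

theorem C_mem_nonnegCoeff {a : ℝ} (ha : 0 ≤ a) : C a ∈ nonnegCoeff := fun i => by
  rw [coeff_C]; split_ifs <;> simp [ha]

theorem X_mem_nonnegCoeff : (X : ℝ[X]) ∈ nonnegCoeff := fun i => by
  rw [coeff_X]; split_ifs <;> norm_num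

/-- For `t ≤ 0`, `P(1 - t, s)` majorises `P(1 + t, s + 4t)` coefficientwise in `s`. Put `δ² = 4t`.
The recursion for `(P, Q)` becomes, for the pair `(P + δ Q, Q)`, multiplication by the matrix with
rows `(1 + t + δ, s)` and `(1, 1 + t - δ)`. Since `1 + t ± δ = (1 ± √t)²` has modulus `1 - t` for
`t ≤ 0`, taking moduli of the entries gives exactly the recursion of `pq (1 - t) s`. -/
theorem pq_majorant {t : ℝ} (ht : t ≤ 0) (n i : ℕ) :
    |(pq (C (1 + t)) (X + C (4 * t)) n).1.coeff i| ≤ (pq (C (1 - t)) X n).1.coeff i := by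
  -- `σ i` is a square root of `t`
  obtain ⟨σ, hσ⟩ : ∃ σ : ℝ, σ ^ 2 = -t := ⟨√(-t), Real.sq_sqrt (by linarith)⟩
  set δ : ℂ := 2 * σ * Complex.I with hδ
  have hσ' : (σ : ℂ) ^ 2 = -t := by exact_mod_cast hσ
  have hδ2 : δ ^ 2 = 4 * t := by
    rw [hδ, mul_pow, Complex.I_sq, mul_pow, hσ']; ring
  have hnorm : ∀ z : ℂ, z.re = 1 → z.im ^ 2 = σ ^ 2 → ‖z ^ 2‖ = 1 - t := by
    intro z hz hz'
    rw [norm_pow, Complex.sq_norm, Complex.normSq_apply, hz, ← sq, ← sq, hz', hσ]; ring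
  have hα : ‖(1 + t + δ : ℂ)‖ = 1 - t := by
    rw [← hnorm (1 + σ * Complex.I) (by simp) (by simp)]
    congr 1
    rw [hδ, add_sq, mul_pow, Complex.I_sq, hσ']; ring
  have hβ : ‖(1 + t - δ : ℂ)‖ = 1 - t := by
    rw [← hnorm (1 - σ * Complex.I) (by simp) (by simp)]
    congr 1
    rw [hδ, sub_sq, mul_pow, Complex.I_sq, hσ']; ring
  suffices h : ∀ i, ‖((pq (C (1 + t)) (X + C (4 * t)) n).1.coeff i : ℂ) +
        δ * (pq (C (1 + t)) (X + C (4 * t)) n).2.coeff i‖ ≤ (pq (C (1 - t)) X n).1.coeff i ∧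
      ‖((pq (C (1 + t)) (X + C (4 * t)) n).2.coeff i : ℂ)‖ ≤ (pq (C (1 - t)) X n).2.coeff i by
    -- `δ` is purely imaginary, so the real part of `P + δ Q` is `P`
    have h1 := (Complex.abs_re_le_norm _).trans (h i).1
    simpa [hδ] using h1
  induction n with
  | zero =>
    intro i
    simp only [pq, coeff_one, coeff_zero]
    split_ifs <;> simp
  | succ n ih =>
    intro i
    simp only [pq_succ_fst, pq_succ_snd, add_mul X, coeff_add, coeff_C_mul]
    set P := (pq (C (1 + t)) (X + C (4 * t)) n).1
    set Q := (pq (C (1 + t)) (X + C (4 * t)) n).2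
    set P' := (pq (C (1 - t)) X n).1
    set Q' := (pq (C (1 - t)) X n).2
    obtain ⟨h1, h2⟩ := ih i
    have hX : ‖((X * Q).coeff i : ℂ)‖ ≤ (X * Q').coeff i := by
      cases i with
      | zero => simp
      | succ j => rw [coeff_X_mul, coeff_X_mul]; exact (ih j).2
    push_cast
    constructor
    · have e : ((1 + t) * P.coeff i + ((X * Q).coeff i + 4 * t * Q.coeff i) +
          δ * (P.coeff i + (1 + t) * Q.coeff i) : ℂ) =
          (1 + t + δ) * (P.coeff i + δ * Q.coeff i) + (X * Q).coeff i := by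
        linear_combination -(Q.coeff i : ℂ) * hδ2
      rw [e]
      refine (norm_add_le _ _).trans (add_le_add ?_ hX)
      rw [norm_mul, hα]
      exact mul_le_mul_of_nonneg_left h1 (by linarith)
    · have e : (P.coeff i + (1 + t) * Q.coeff i : ℂ) =
          (P.coeff i + δ * Q.coeff i) + (1 + t - δ) * Q.coeff i := by ring
      rw [e]
      refine (norm_add_le _ _).trans (add_le_add h1 ?_)
      rw [norm_mul, hβ]
      exact mul_le_mul_of_nonneg_left h2 (by linarith)

/-- For `a, b` affine in `t`, the coefficient of `s ^ i` in `P(a, s + b)` has degree at most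
`n - 2i` in `t`, and vanishes for `2i > n`; for `Q`, the same with `n - 1` in place of `n`. -/
theorem pq_coeff_coeff (a b : ℝ[X]) (ha : a.natDegree ≤ 1) (hb : b.natDegree ≤ 1) (n : ℕ) :
    ∀ i j, (n < 2 * i + j → ((pq (C a) (X + C b) n).1.coeff i).coeff j = 0) ∧
      (n < 2 * i + j + 1 → ((pq (C a) (X + C b) n).2.coeff i).coeff j = 0) := by
  have lin : ∀ f g : ℝ[X], f.natDegree ≤ 1 → ∀ j, g.coeff j = 0 →
      (∀ j', j = j' + 1 → g.coeff j' = 0) → (f * g).coeff j = 0 := by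
    intro f g hf j h0 h1
    rw [eq_X_add_C_of_natDegree_le_one hf, add_mul, mul_assoc, coeff_add, coeff_C_mul,
      coeff_C_mul, h0]
    cases j with
    | zero => simp
    | succ j => rw [coeff_X_mul, h1 j rfl]; simp
  induction n with
  | zero =>
    intro i j
    simp only [pq, coeff_one, coeff_zero]
    refine ⟨fun h => ?_, by simp⟩
    split_ifs with hi
    · rw [coeff_one, if_neg (by omega)]
    · simp
  | succ n ih =>
    intro i j
    simp only [pq_succ_fst, pq_succ_snd, add_mul, coeff_add, coeff_C_mul]
    constructor
    · intro h
      rw [lin a _ ha j ((ih i j).1 (by omega)) (fun j' hj => (ih i j').1 (by omega)),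
        lin b _ hb j ((ih i j).2 (by omega)) (fun j' hj => (ih i j').2 (by omega))]
      cases i with
      | zero => simp
      | succ i => rw [coeff_X_mul, (ih i j).2 (by omega)]; simp
    · intro h
      rw [lin a _ ha j ((ih i j).2 (by omega)) (fun j' hj => (ih i j').2 (by omega)),
        (ih i j).1 (by omega), add_zero]

/-- The two-point polynomial `(4k - 1) P(1 - t, s) + P(1 + t, s + 4t) - 4k` with exponent `2k`,
dehomogenised at `v = 1`. The outer variable is `s` and the inner one is `t`. The summand `C 0`
makes the first term an instance of `pq_coeff_coeff`. -/
noncomputable def twoPoint (k : ℕ) : ℝ[X][X] :=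
  C (C (4 * k - 1 : ℝ)) * (pq (C (1 - X : ℝ[X])) (X + C 0) (2 * k)).1 +
    (pq (C (1 + X : ℝ[X])) (X + C (4 * X)) (2 * k)).1 - C (C (4 * k : ℝ))

theorem twoPoint_natDegree (k i : ℕ) (hi : i ≤ k) :
    ((twoPoint k).coeff i).natDegree ≤ 2 * (k - i) := by
  rw [natDegree_le_iff_coeff_eq_zero]
  intro j hj
  have h1 := ((pq_coeff_coeff (1 - X) 0 (by compute_degree) (by simp) (2 * k)) i j).1 (by omega)
  have h2 := ((pq_coeff_coeff (1 + X) (4 * X) (by compute_degree) (by compute_degree)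
    (2 * k)) i j).1 (by omega)
  simp only [twoPoint, coeff_sub, coeff_add, coeff_C_mul, h1, h2]
  rw [coeff_C]
  split_ifs with h
  · rw [coeff_C, if_neg (by omega)]; simp
  · simp

theorem twoPoint_coeff_eq_zero (k i : ℕ) (hi : k < i) : (twoPoint k).coeff i = 0 := by
  ext j
  have h1 := ((pq_coeff_coeff (1 - X) 0 (by compute_degree) (by simp) (2 * k)) i j).1 (by omega)
  have h2 := ((pq_coeff_coeff (1 + X) (4 * X) (by compute_degree) (by compute_degree)
    (2 * k)) i j).1 (by omega)
  simp only [twoPoint, coeff_sub, coeff_add, coeff_C_mul, h1, h2]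
  rw [coeff_C, if_neg (by omega)]; simp

/-- The two-point polynomial at a fixed real `t`, as a polynomial in `s`. -/
theorem twoPoint_map (k : ℕ) (t : ℝ) : (twoPoint k).map (evalRingHom t) =
    C (4 * k - 1 : ℝ) * (pq (C (1 - t)) X (2 * k)).1 +
      (pq (C (1 + t)) (X + C (4 * t)) (2 * k)).1 - C (4 * k : ℝ) := by
  rw [← coe_mapRingHom, twoPoint, map_sub, map_add, map_mul, map_pq_fst, map_pq_fst]
  simp

/-- The coefficient of each `s ^ i` in the two-point polynomial is nonnegative as a function of the
real variable `t`; this is where the value `1 - 1 / (2k)` of the correlation is used. -/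
theorem twoPoint_coeff_nonneg {k : ℕ} (hk : 1 ≤ k) (i : ℕ) (t : ℝ) :
    0 ≤ ((twoPoint k).coeff i).eval t := by
  have hk' : (1 : ℝ) ≤ k := by exact_mod_cast hk
  rw [← coe_evalRingHom, ← coeff_map, twoPoint_map, coeff_sub, coeff_add, coeff_C_mul]
  rcases Nat.eq_zero_or_pos i with rfl | hi
  · have h1 := map_pq_fst (evalRingHom (0 : ℝ)) (C (1 - t)) X (2 * k)
    have h2 := map_pq_fst (evalRingHom (0 : ℝ)) (C (1 + t)) (X + C (4 * t)) (2 * k)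
    simp only [coe_evalRingHom, eval_C, eval_X, eval_add, zero_add, pq_zero_fst] at h1 h2
    rw [coeff_zero_eq_eval_zero, coeff_zero_eq_eval_zero, h1, h2, coeff_C_zero]
    exact const_coeff_nonneg hk t
  · rw [coeff_C_of_ne_zero hi.ne', sub_zero]
    have hB := (pq_even_mem nonnegCoeff (c := C (1 - t)) (w := X)
      (by rw [← C_pow]; exact C_mem_nonnegCoeff (sq_nonneg _)) X_mem_nonnegCoeff k).1 i
    rcases le_total t 0 with ht | ht
    -- the majorant has weight `4 k - 1 ≥ 1`
    · have := neg_le_of_abs_le (pq_majorant ht (2 * k) i)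
      nlinarith
    · have hA := (pq_even_mem nonnegCoeff (c := C (1 + t)) (w := X + C (4 * t))
        (by rw [← C_pow]; exact C_mem_nonnegCoeff (sq_nonneg _))
        (nonnegCoeff.add_mem X_mem_nonnegCoeff (C_mem_nonnegCoeff (by linarith))) k).1 i
      have : 0 ≤ (4 * k - 1 : ℝ) := by linarith
      positivity

/-! ### Homogenisation and the certificate -/

/-- The homogenisation `v ^ m * q (t / v)` of `q` in degree `m`. It is meant for
`q.natDegree ≤ m`: coefficients of `q` beyond `m` are discarded. -/
noncomputable def hom {R : Type*} [CommRing R] [Algebra ℝ R] (m : ℕ) (q : ℝ[X]) (v t : R) : R :=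
  ∑ l ∈ Finset.range (m + 1), algebraMap ℝ R (q.coeff l) * v ^ (m - l) * t ^ l

theorem map_hom {R S : Type*} [CommRing R] [Algebra ℝ R] [CommRing S] [Algebra ℝ S]
    (f : R →ₐ[ℝ] S) (m : ℕ) (q : ℝ[X]) (v t : R) : f (hom m q v t) = hom m q (f v) (f t) := by
  simp [hom]

theorem hom_real {m : ℕ} {q : ℝ[X]} (hq : q.natDegree ≤ m) {v : ℝ} (hv : v ≠ 0) (t : ℝ) :
    hom m q v t = v ^ m * q.eval (t / v) := by
  rw [eval_eq_sum_range' (Nat.lt_succ_of_le hq), hom, Finset.mul_sum]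
  refine Finset.sum_congr rfl fun l hl => ?_
  have hl' : l ≤ m := Nat.lt_succ_iff.mp (Finset.mem_range.mp hl)
  rw [div_pow, ← Nat.sub_add_cancel hl', Nat.add_sub_cancel]
  simp only [Algebra.algebraMap_self, RingHom.id_apply, pow_add]
  field_simp

/-- Homogenisation of the two-point polynomial, `t` having weight `1` and `s` weight `2`. -/
theorem twoPoint_real (k : ℕ) {v : ℝ} (hv : v ≠ 0) (t s : ℝ) :
    (4 * k - 1) * (pq (v - t) s (2 * k)).1 + (pq (v + t) (s + 4 * t * v) (2 * k)).1
        - 4 * k * v ^ (2 * k) =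
      v ^ (2 * k) * ∑ i ∈ Finset.range (k + 1),
        ((twoPoint k).coeff i).eval (t / v) * (s / v ^ 2) ^ i := by
  have h : ∑ i ∈ Finset.range (k + 1), ((twoPoint k).coeff i).eval (t / v) * (s / v ^ 2) ^ i =
      ((twoPoint k).map (evalRingHom (t / v))).eval (s / v ^ 2) := by
    rw [eval_eq_sum_range' (n := k + 1)]
    · simp [coeff_map]
    · refine Nat.lt_succ_of_le (natDegree_le_iff_coeff_eq_zero.mpr fun i hi => ?_)
      rw [coeff_map, twoPoint_coeff_eq_zero k i hi, map_zero]
  have h1 := map_pq_fst (evalRingHom (s / v ^ 2)) (C (1 - t / v)) X (2 * k)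
  have h2 := map_pq_fst (evalRingHom (s / v ^ 2)) (C (1 + t / v)) (X + C (4 * (t / v))) (2 * k)
  simp only [coe_evalRingHom, eval_C, eval_X, eval_add] at h1 h2
  rw [h, twoPoint_map, eval_sub, eval_add, eval_mul, eval_C, eval_C, h1, h2, mul_sub, mul_add,
    mul_left_comm, ← pq_smul_fst, ← pq_smul_fst]
  have e1 : v * (1 - t / v) = v - t := by field_simp
  have e2 : v * (1 + t / v) = v + t := by field_simp
  have e3 : v ^ 2 * (s / v ^ 2) = s := by field_simp
  have e4 : v ^ 2 * (s / v ^ 2 + 4 * (t / v)) = s + 4 * t * v := by field_simp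
  rw [e1, e2, e3, e4]; ring

/-- An explicit sum of squares for the homogenised two-point polynomial with `s = d ^ 2`. The
polynomials `q i`, `r i` do not depend on the ring, so that elements of any commutative
`ℝ`-algebra may be substituted for `v, t, d`. -/
theorem twoPoint_sos {k : ℕ} (hk : 1 ≤ k) : ∃ q r : ℕ → ℝ[X],
    ∀ (R : Type) [CommRing R] [Algebra ℝ R] (v t d : R),
      (4 * k - 1) * (pq (v - t) (d ^ 2) (2 * k)).1
          + (pq (v + t) (d ^ 2 + 4 * t * v) (2 * k)).1 - 4 * k * v ^ (2 * k) =
        ∑ i ∈ Finset.range (k + 1),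
          ((d ^ i * hom (k - i) (q i) v t) ^ 2 + (d ^ i * hom (k - i) (r i) v t) ^ 2) := by
  choose q r hqr hq hr using fun i =>
    exists_two_squares _ _ le_rfl (twoPoint_coeff_nonneg hk i)
  refine ⟨q, r, fun R _ _ v t d => ?_⟩
  -- the real identity, for a nonzero first argument
  have real : ∀ v t d : ℝ, v ≠ 0 →
      (4 * k - 1) * (pq (v - t) (d ^ 2) (2 * k)).1
          + (pq (v + t) (d ^ 2 + 4 * t * v) (2 * k)).1 - 4 * k * v ^ (2 * k) =
        ∑ i ∈ Finset.range (k + 1),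
          ((d ^ i * hom (k - i) (q i) v t) ^ 2 + (d ^ i * hom (k - i) (r i) v t) ^ 2) := by
    intro v t d hv
    rw [twoPoint_real k hv, Finset.mul_sum]
    refine Finset.sum_congr rfl fun i hi => ?_
    have hi' : i ≤ k := Nat.lt_succ_iff.mp (Finset.mem_range.mp hi)
    have hd := twoPoint_natDegree k i hi'
    have h1 := hq i
    have h2 := hr i
    rw [hom_real (by omega) hv, hom_real (by omega) hv, hqr i]
    obtain ⟨j, rfl⟩ := Nat.exists_eq_add_of_le hi'
    simp only [Nat.add_sub_cancel_left, eval_add, eval_pow]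
    rw [div_pow, ← pow_mul, ← pow_mul v, mul_add 2 i j, pow_add v]
    field_simp
    ring
  -- the identity for indeterminates follows, since after multiplication by the first indeterminate
  -- both sides agree at every real point; it can then be specialised to any `ℝ`-algebra
  let x : Fin 3 → MvPolynomial (Fin 3) ℝ := MvPolynomial.X
  have gen : (4 * k - 1) * (pq (x 0 - x 1) (x 2 ^ 2) (2 * k)).1
          + (pq (x 0 + x 1) (x 2 ^ 2 + 4 * x 1 * x 0) (2 * k)).1 - 4 * k * x 0 ^ (2 * k) =
        ∑ i ∈ Finset.range (k + 1),
          ((x 2 ^ i * hom (k - i) (q i) (x 0) (x 1)) ^ 2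
            + (x 2 ^ i * hom (k - i) (r i) (x 0) (x 1)) ^ 2) := by
    refine mul_left_cancel₀ (MvPolynomial.X_ne_zero (0 : Fin 3)) (MvPolynomial.funext fun e => ?_)
    rw [map_mul, map_mul, MvPolynomial.eval_X]
    rcases eq_or_ne (e 0) 0 with h0 | h0
    · rw [h0, zero_mul, zero_mul]
    congr 1
    have := real (e 0) (e 1) (e 2) h0
    rw [← MvPolynomial.coe_aeval_eq_eval]
    simp only [map_sub, map_add, map_mul, map_sum, map_pow, map_hom, RingHom.coe_coe]
    rw [← RingHom.coe_coe (MvPolynomial.aeval e), map_pq_fst, map_pq_fst]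
    simpa [x, map_hom] using this
  have := congrArg (MvPolynomial.aeval ![v, t, d]) gen
  simp only [map_sub, map_add, map_mul, map_sum, map_pow, map_hom] at this
  rw [← RingHom.coe_coe (MvPolynomial.aeval ![v, t, d]), map_pq_fst, map_pq_fst] at this
  simpa [x, map_hom] using this

end Polynomial

/-! ### Sums of squares of bounded degree -/

section Cone
variable {σ : Type}

/-- The finite sums of squares of polynomials of total degree at most `d`. -/
noncomputable def sosCone (σ : Type) (d : ℕ) : AddSubmonoid (MvPolynomial σ ℝ) :=
  AddSubmonoid.closure {p | ∃ q : MvPolynomial σ ℝ, q.totalDegree ≤ d ∧ p = q ^ 2}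

theorem sq_mem_sosCone {d : ℕ} {q : MvPolynomial σ ℝ} (hq : q.totalDegree ≤ d) :
    q ^ 2 ∈ sosCone σ d := AddSubmonoid.subset_closure ⟨q, hq, rfl⟩

theorem mul_mem_sosCone {d e : ℕ} {p q : MvPolynomial σ ℝ} (hp : p ∈ sosCone σ d)
    (hq : q ∈ sosCone σ e) : p * q ∈ sosCone σ (d + e) := by
  induction hp using AddSubmonoid.closure_induction with
  | zero => rw [zero_mul]; exact zero_mem _
  | add x y _ _ hx hy => rw [add_mul]; exact add_mem hx hy
  | mem x hx =>
    obtain ⟨r, hr, rfl⟩ := hx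
    induction hq using AddSubmonoid.closure_induction with
    | zero => rw [mul_zero]; exact zero_mem _
    | add x y _ _ hx hy => rw [mul_add]; exact add_mem hx hy
    | mem x hx =>
      obtain ⟨s, hs, rfl⟩ := hx
      rw [← mul_pow]
      exact sq_mem_sosCone ((totalDegree_mul _ _).trans (add_le_add hr hs))

theorem C_mem_sosCone {a : ℝ} (ha : 0 ≤ a) (d : ℕ) : (C a : MvPolynomial σ ℝ) ∈ sosCone σ d := by
  rw [← Real.sq_sqrt ha, C_pow]
  exact sq_mem_sosCone (by simp)

theorem C_mul_mem_sosCone {a : ℝ} (ha : 0 ≤ a) {d : ℕ} {p : MvPolynomial σ ℝ}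
    (hp : p ∈ sosCone σ d) : C a * p ∈ sosCone σ d := by
  have := mul_mem_sosCone (C_mem_sosCone (σ := σ) ha 0) hp
  rwa [zero_add] at this

theorem exists_fin_of_mem_sosCone {d : ℕ} {p : MvPolynomial σ ℝ} (hp : p ∈ sosCone σ d) :
    ∃ (m : ℕ) (q : Fin m → MvPolynomial σ ℝ), (∀ j, (q j).totalDegree ≤ d) ∧
      p = ∑ j, q j ^ 2 := by
  induction hp using AddSubmonoid.closure_induction with
  | zero => exact ⟨0, Fin.elim0, fun j => j.elim0, by simp⟩
  | add x y _ _ hx hy =>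
    obtain ⟨m, q, hq, rfl⟩ := hx
    obtain ⟨m', q', hq', rfl⟩ := hy
    refine ⟨m + m', Fin.append q q', fun j => ?_, by simp [Fin.sum_univ_add]⟩
    refine Fin.addCases (fun j => ?_) (fun j => ?_) j <;> simp [hq, hq']
  | mem x hx =>
    obtain ⟨r, hr, rfl⟩ := hx
    exact ⟨1, fun _ => r, fun _ => hr, by simp⟩

theorem totalDegree_hom {m : ℕ} (q : Polynomial ℝ) {v t : MvPolynomial σ ℝ}
    (hv : v.totalDegree ≤ 2) (ht : t.totalDegree ≤ 2) :
    (Polynomial.hom m q v t).totalDegree ≤ 2 * m := by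
  refine totalDegree_finsetSum_le fun l hl => ?_
  have hl' : l ≤ m := Nat.lt_succ_iff.mp (Finset.mem_range.mp hl)
  have h1 := totalDegree_mul (algebraMap ℝ (MvPolynomial σ ℝ) (q.coeff l) * v ^ (m - l)) (t ^ l)
  have h2 := totalDegree_mul (algebraMap ℝ (MvPolynomial σ ℝ) (q.coeff l)) (v ^ (m - l))
  have h3 := totalDegree_pow v (m - l)
  have h4 := totalDegree_pow t l
  have h5 : (algebraMap ℝ (MvPolynomial σ ℝ) (q.coeff l)).totalDegree = 0 := totalDegree_C _
  have h6 := Nat.mul_le_mul_left (m - l) hv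
  have h7 := Nat.mul_le_mul_left l ht
  omega

/-- The last component is the one-variable power mean inequality
`((c + y) ^ (2m) + (c - y) ^ (2m)) / 2 ≥ c ^ (2m)` with `w = y ^ 2`, in sum of squares form; the
first two make the induction go through. -/
theorem pq_mem_sosCone {c w : MvPolynomial σ ℝ} (hc : c ^ 2 ∈ sosCone σ 1)
    (hw : w ∈ sosCone σ 1) (m : ℕ) : (pq c w (2 * m)).1 ∈ sosCone σ m ∧
      c * (pq c w (2 * m)).2 ∈ sosCone σ m ∧ (pq c w (2 * m)).1 - c ^ (2 * m) ∈ sosCone σ m := by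
  induction m with
  | zero =>
    simpa [pq, zero_mem] using C_mem_sosCone (σ := σ) zero_le_one 0
  | succ m ih =>
    obtain ⟨h1, h2, h3⟩ := ih
    have dbl : ∀ {p : MvPolynomial σ ℝ} {d}, p ∈ sosCone σ d → 2 * p ∈ sosCone σ d :=
      fun hp => by rw [two_mul]; exact add_mem hp hp
    have two : ∀ {a p}, a ∈ sosCone σ 1 → p ∈ sosCone σ m → a * p ∈ sosCone σ (m + 1) :=
      fun ha hp => add_comm 1 m ▸ mul_mem_sosCone ha hp
    rw [mul_add, mul_one, pq_two_fst, pq_two_snd]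
    refine ⟨add_mem (two (add_mem hc hw) h1) (two (dbl hw) h2),
      add_mem (two (add_mem hc hw) h2) (two (dbl hc) h1), ?_⟩
    have e : (c ^ 2 + w) * (pq c w (2 * m)).1 + 2 * w * (c * (pq c w (2 * m)).2)
        - c ^ (2 * m + 2) = c ^ 2 * ((pq c w (2 * m)).1 - c ^ (2 * m)) +
          w * (pq c w (2 * m)).1 + 2 * w * (c * (pq c w (2 * m)).2) := by ring
    rw [e]
    exact add_mem (add_mem (two hc h3) (two hw h1)) (two (dbl hw) h2)

/-! ### The two-point inequality -/

/-- The two-point inequality at `ρ = 1 - 1 / (2k)`, multiplied by `4k`, for `F = μ ± a` and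
`G = ν ∓ b`. The certificate is `twoPoint_sos` at `v = μ * ν`, `t = a * b`, `d = a * ν - b * μ`. -/
theorem two_point_extremal {k : ℕ} (hk : 1 ≤ k) {μ a ν b : MvPolynomial σ ℝ}
    (hμ : μ.totalDegree ≤ 1) (ha : a.totalDegree ≤ 1) (hν : ν.totalDegree ≤ 1)
    (hb : b.totalDegree ≤ 1) :
    (4 * k - 1) * (pq (μ * ν - a * b) ((a * ν - b * μ) ^ 2) (2 * k)).1
      + (pq (μ * ν + a * b) ((a * ν + b * μ) ^ 2) (2 * k)).1 - 4 * k * (μ * ν) ^ (2 * k)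
      ∈ sosCone σ (2 * k) := by
  have mul1 : ∀ {x y : MvPolynomial σ ℝ}, x.totalDegree ≤ 1 → y.totalDegree ≤ 1 →
      (x * y).totalDegree ≤ 2 := fun hx hy =>
    (totalDegree_mul _ _).trans (add_le_add hx hy)
  have hv := mul1 hμ hν
  have ht := mul1 ha hb
  have hd : (a * ν - b * μ).totalDegree ≤ 2 :=
    (totalDegree_sub _ _).trans (max_le (mul1 ha hν) (mul1 hb hμ))
  obtain ⟨q, r, h⟩ := Polynomial.twoPoint_sos hk
  have h := h _ (μ * ν) (a * b) (a * ν - b * μ)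
  have e : (a * ν - b * μ) ^ 2 + 4 * (a * b) * (μ * ν) = (a * ν + b * μ) ^ 2 := by ring
  rw [e] at h
  rw [h]
  have deg : ∀ i ∈ Finset.range (k + 1), ∀ f : Polynomial ℝ,
      ((a * ν - b * μ) ^ i * Polynomial.hom (k - i) f (μ * ν) (a * b)).totalDegree ≤ 2 * k := by
    intro i hi f
    have hi' : i ≤ k := Nat.lt_succ_iff.mp (Finset.mem_range.mp hi)
    have h1 := totalDegree_hom (m := k - i) f hv ht
    have h2 := totalDegree_mul ((a * ν - b * μ) ^ i) (Polynomial.hom (k - i) f (μ * ν) (a * b))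
    have h3 := totalDegree_pow (a * ν - b * μ) i
    have h4 := Nat.mul_le_mul_left i hd
    omega
  exact sum_mem fun i hi => add_mem (sq_mem_sosCone (deg i hi _)) (sq_mem_sosCone (deg i hi _))

/-- The case `n = 1` of the inequality, for arbitrary polynomials of degree at most `1`. -/
theorem two_point {k : ℕ} (hk : 1 ≤ k) {ρ : ℝ} (hρ0 : 0 ≤ ρ) (hρ1 : ρ ≤ 1 - 1 / (2 * (k : ℝ)))
    {F₁ F₀ G₁ G₀ : MvPolynomial σ ℝ} (hF₁ : F₁.totalDegree ≤ 1) (hF₀ : F₀.totalDegree ≤ 1)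
    (hG₁ : G₁.totalDegree ≤ 1) (hG₀ : G₀.totalDegree ≤ 1) :
    C ((1 + ρ) / 4) * (F₁ ^ (2 * k) * G₁ ^ (2 * k) + F₀ ^ (2 * k) * G₀ ^ (2 * k)) +
      C ((1 - ρ) / 4) * (F₁ ^ (2 * k) * G₀ ^ (2 * k) + F₀ ^ (2 * k) * G₁ ^ (2 * k)) -
      (C (1 / 2) * (F₁ + F₀)) ^ (2 * k) * (C (1 / 2) * (G₁ + G₀)) ^ (2 * k)
      ∈ sosCone σ (2 * k) := by
  have half : (C (1 / 2) : MvPolynomial σ ℝ) * 2 = 1 := by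
    rw [← map_ofNat C 2, ← C_mul]; norm_num
  have Cmul : ∀ {c : ℝ} {p : MvPolynomial σ ℝ}, p.totalDegree ≤ 1 → (C c * p).totalDegree ≤ 1 :=
    fun {c p} hp => by
      have := totalDegree_mul (C c) p
      rw [totalDegree_C] at this; omega
  obtain ⟨μ, hμ⟩ : ∃ μ, μ = C (1 / 2) * (F₁ + F₀) := ⟨_, rfl⟩
  obtain ⟨a, ha⟩ : ∃ a, a = C (1 / 2) * (F₁ - F₀) := ⟨_, rfl⟩
  obtain ⟨ν, hν⟩ : ∃ ν, ν = C (1 / 2) * (G₁ + G₀) := ⟨_, rfl⟩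
  -- with this sign of `b` the products carrying the larger weight are
  -- `F₁ G₁, F₀ G₀ = (μ ν - a b) ± (a ν - b μ)`
  obtain ⟨b, hb⟩ : ∃ b, b = C (1 / 2) * (G₀ - G₁) := ⟨_, rfl⟩
  have dμ : μ.totalDegree ≤ 1 := hμ ▸ Cmul ((totalDegree_add _ _).trans (max_le hF₁ hF₀))
  have da : a.totalDegree ≤ 1 := ha ▸ Cmul ((totalDegree_sub _ _).trans (max_le hF₁ hF₀))
  have dν : ν.totalDegree ≤ 1 := hν ▸ Cmul ((totalDegree_add _ _).trans (max_le hG₁ hG₀))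
  have db : b.totalDegree ≤ 1 := hb ▸ Cmul ((totalDegree_sub _ _).trans (max_le hG₀ hG₁))
  have eF₁ : F₁ = μ + a := by rw [hμ, ha]; linear_combination -F₁ * half
  have eF₀ : F₀ = μ - a := by rw [hμ, ha]; linear_combination -F₀ * half
  have eG₁ : G₁ = ν - b := by rw [hν, hb]; linear_combination -G₁ * half
  have eG₀ : G₀ = ν + b := by rw [hν, hb]; linear_combination -G₀ * half
  rw [← hμ, ← hν, eF₁, eF₀, eG₁, eG₀]
  clear hμ ha hν hb eF₁ eF₀ eG₁ eG₀
  -- `B` and `A` are half the sums of `2k`-th powers of the products of equal, respectively opposite,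
  -- signs
  set B := (pq (μ * ν - a * b) ((a * ν - b * μ) ^ 2) (2 * k)).1 with hB
  set A := (pq (μ * ν + a * b) ((a * ν + b * μ) ^ 2) (2 * k)).1 with hA
  have h1 : (μ + a) ^ (2 * k) * (ν - b) ^ (2 * k) + (μ - a) ^ (2 * k) * (ν + b) ^ (2 * k)
      = 2 * B := by
    rw [hB, ← add_pow_add_sub_pow, ← mul_pow, ← mul_pow]
    congr 2 <;> ring
  have h2 : (μ + a) ^ (2 * k) * (ν + b) ^ (2 * k) + (μ - a) ^ (2 * k) * (ν - b) ^ (2 * k)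
      = 2 * A := by
    rw [hA, ← add_pow_add_sub_pow, ← mul_pow, ← mul_pow]
    congr 2 <;> ring
  rw [h1, h2]
  -- at correlation zero the difference factors through the one-variable power mean
  have h0 : C (1 / 2) * B + C (1 / 2) * A - μ ^ (2 * k) * ν ^ (2 * k) ∈ sosCone σ (2 * k) := by
    have hμ := pq_mem_sosCone (sq_mem_sosCone dμ) (sq_mem_sosCone da) k
    have hν := pq_mem_sosCone (sq_mem_sosCone dν) (sq_mem_sosCone db) k
    have e1 := add_pow_add_sub_pow μ a (2 * k)
    have e2 := add_pow_add_sub_pow ν b (2 * k)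
    have hνk : ν ^ (2 * k) ∈ sosCone σ k := by
      rw [mul_comm, pow_mul]
      exact sq_mem_sosCone ((totalDegree_pow _ _).trans (by nlinarith))
    have hμk : μ ^ (2 * k) ∈ sosCone σ k := by
      rw [mul_comm, pow_mul]
      exact sq_mem_sosCone ((totalDegree_pow _ _).trans (by nlinarith))
    have := add_mem (mul_mem_sosCone hμ.2.2 hν.1) (mul_mem_sosCone hμk hν.2.2)
    rw [← two_mul] at this
    convert! this using 1
    set P := (pq μ (a ^ 2) (2 * k)).1
    set Q := (pq ν (b ^ 2) (2 * k)).1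
    have hAB : A + B = 2 * (P * Q) := by
      have two_ne : (2 : MvPolynomial σ ℝ) ≠ 0 := two_ne_zero
      apply mul_left_cancel₀ two_ne
      have : 2 * (A + B) = (2 * P) * (2 * Q) := by
        rw [← e1, ← e2]; linear_combination -h1 - h2
      rw [this]; ring
    linear_combination C (1 / 2) * hAB + P * Q * half
  have hk' : (1 : ℝ) ≤ k := by exact_mod_cast hk
  have hM := two_point_extremal hk dμ da dν db
  have hpos : (0 : ℝ) < 2 * k - 1 := by linarith
  -- interpolate between correlation `0` and the extremal one `1 - 1 / (2 k)`
  set l : ℝ := 2 * k * ρ / (2 * k - 1) with hl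
  have hl0 : 0 ≤ l := by positivity
  have hl1 : l ≤ 1 := by
    rw [hl, div_le_one hpos]
    have := mul_le_mul_of_nonneg_left hρ1 (by linarith : (0 : ℝ) ≤ 2 * k)
    have e : 2 * (k : ℝ) * (1 - 1 / (2 * k)) = 2 * k - 1 := by field_simp
    linarith
  have := add_mem (C_mul_mem_sosCone (sub_nonneg.mpr hl1) h0)
    (C_mul_mem_sosCone (by positivity : 0 ≤ l / (4 * k)) hM)
  convert! this using 1
  have c1 : (C ((1 + ρ) / 4) : MvPolynomial σ ℝ) * 2 =
      C (1 - l) * C (1 / 2) + C (l / (4 * (k : ℝ))) * (4 * (k : MvPolynomial σ ℝ) - 1) := by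
    rw [← map_ofNat C 2, ← map_ofNat C 4, ← map_natCast C k, ← C_1]
    simp only [← C_mul, ← C_add, ← C_sub]
    congr 1; rw [hl]; field_simp; ring
  have c2 : (C ((1 - ρ) / 4) : MvPolynomial σ ℝ) * 2 =
      C (1 - l) * C (1 / 2) + C (l / (4 * (k : ℝ))) := by
    rw [← map_ofNat C 2]
    simp only [← C_mul, ← C_add]
    congr 1; rw [hl]; field_simp; ring
  have c3 : (1 : MvPolynomial σ ℝ) = C (1 - l) + C (l / (4 * (k : ℝ))) * (4 * (k : MvPolynomial σ ℝ)) := by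
    rw [← map_ofNat C 4, ← map_natCast C k, ← C_1]
    simp only [← C_mul, ← C_add]
    congr 1; field_simp; ring
  linear_combination B * c1 + A * c2 - μ ^ (2 * k) * ν ^ (2 * k) * c3

/-! ### Tensorisation -/

theorem sum_cube_succ {M : Type*} [AddCommMonoid M] {n : ℕ} (h : (Fin (n + 1) → Bool) → M) :
    ∑ x, h x = ∑ x : Fin n → Bool, h (Fin.cons true x) + ∑ x : Fin n → Bool, h (Fin.cons false x) := by
  rw [← (Fin.consEquiv fun _ : Fin (n + 1) => Bool).sum_comp, Fintype.sum_prod_type,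
    Fintype.sum_bool]
  rfl

/-- The expectation of `F` under the uniform distribution on the cube. -/
noncomputable def mean {n : ℕ} (F : (Fin n → Bool) → MvPolynomial σ ℝ) : MvPolynomial σ ℝ :=
  C (((2:ℝ)^n)⁻¹) * ∑ x, F x

/-- The expectation of `F x * G y` for a `ρ`-correlated pair `(x, y)`. -/
noncomputable def corr (ρ : ℝ) {n : ℕ} (F G : (Fin n → Bool) → MvPolynomial σ ℝ) :
    MvPolynomial σ ℝ :=
  C (((4:ℝ)^n)⁻¹) * ∑ x : Fin n → Bool, ∑ y : Fin n → Bool,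
    C (∏ i, (1 + ρ * sgn (x i) * sgn (y i))) * F x * G y

theorem mean_succ {n : ℕ} (F : (Fin (n + 1) → Bool) → MvPolynomial σ ℝ) :
    mean F = C (1 / 2) * (mean (fun x => F (Fin.cons true x))
      + mean fun x => F (Fin.cons false x)) := by
  rw [mean, mean, mean, sum_cube_succ, ← mul_add, ← mul_assoc, ← C_mul, pow_succ, mul_inv]
  congr 2; ring

/-- Conditioning on the first coordinates of `x` and `y`: they agree with probability
`(1 + ρ) / 2`. -/
theorem corr_succ (ρ : ℝ) {n : ℕ} (F G : (Fin (n + 1) → Bool) → MvPolynomial σ ℝ) :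
    corr ρ F G =
      C ((1 + ρ) / 4) *
        (corr ρ (fun x => F (Fin.cons true x)) (fun y => G (Fin.cons true y))
          + corr ρ (fun x => F (Fin.cons false x)) (fun y => G (Fin.cons false y))) +
      C ((1 - ρ) / 4) *
        (corr ρ (fun x => F (Fin.cons true x)) (fun y => G (Fin.cons false y))
          + corr ρ (fun x => F (Fin.cons false x)) (fun y => G (Fin.cons true y))) := by
  have e : (((4:ℝ)^(n + 1))⁻¹) = 1 / 4 * ((4:ℝ)^n)⁻¹ := by rw [pow_succ, mul_inv]; ring
  have e1 : (1 + ρ) / 4 = 1 / 4 * (1 + ρ) := by ring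
  have e2 : (1 - ρ) / 4 = 1 / 4 * (1 - ρ) := by ring
  have s1 : 1 + ρ * sgn true * sgn true = 1 + ρ := by simp [sgn]
  have s2 : 1 + ρ * sgn false * sgn false = 1 + ρ := by simp [sgn]
  have s3 : 1 + ρ * sgn true * sgn false = 1 - ρ := by simp [sgn]; ring
  have s4 : 1 + ρ * sgn false * sgn true = 1 - ρ := by simp [sgn]; ring
  simp only [corr, sum_cube_succ, Fin.prod_univ_succ, Fin.cons_zero, Fin.cons_succ,
    Finset.sum_add_distrib, s1, s2, s3, s4]
  simp only [C_mul, mul_assoc, ← Finset.mul_sum]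
  rw [e, e1, e2]
  simp only [C_mul]
  ring

theorem totalDegree_mean {n : ℕ} {F : (Fin n → Bool) → MvPolynomial σ ℝ}
    (hF : ∀ x, (F x).totalDegree ≤ 1) : (mean F).totalDegree ≤ 1 := by
  have h1 := totalDegree_mul (C (((2:ℝ)^n)⁻¹)) (∑ x, F x)
  have h2 : (∑ x, F x).totalDegree ≤ 1 := totalDegree_finsetSum_le fun x _ => hF x
  rw [totalDegree_C] at h1
  rw [mean]; omega

/-- Induction on the dimension: the inequality is used for each pair of restrictions to a value of
the first coordinate, and then `two_point` is used for the means of these restrictions. The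
indeterminates are replaced by arbitrary polynomials of degree at most `1`, a class that is closed
under taking means. -/
theorem corr_sub_mem_sosCone {k : ℕ} (hk : 1 ≤ k) {ρ : ℝ} (hρ0 : 0 ≤ ρ)
    (hρ1 : ρ ≤ 1 - 1 / (2 * (k : ℝ))) (n : ℕ) :
    ∀ F G : (Fin n → Bool) → MvPolynomial σ ℝ, (∀ x, (F x).totalDegree ≤ 1) →
      (∀ x, (G x).totalDegree ≤ 1) →
      corr ρ (fun x => F x ^ (2 * k)) (fun x => G x ^ (2 * k))
        - mean F ^ (2 * k) * mean G ^ (2 * k) ∈ sosCone σ (2 * k) := by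
  induction n with
  | zero =>
    intro F G _ _
    simp [corr, mean, zero_mem]
  | succ n ih =>
    intro F G hF hG
    have hρ : ρ ≤ 1 := hρ1.trans (by simp)
    have hs := two_point hk hρ0 hρ1
      (totalDegree_mean fun x => hF (Fin.cons true x))
      (totalDegree_mean fun x => hF (Fin.cons false x))
      (totalDegree_mean fun x => hG (Fin.cons true x))
      (totalDegree_mean fun x => hG (Fin.cons false x))
    have step := fun u v : Bool =>
      ih (fun x => F (Fin.cons u x)) (fun x => G (Fin.cons v x)) (fun _ => hF _) (fun _ => hG _)
    have h1 := C_mul_mem_sosCone (by linarith : 0 ≤ (1 + ρ) / 4)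
      (add_mem (step true true) (step false false))
    have h2 := C_mul_mem_sosCone (by linarith : 0 ≤ (1 - ρ) / 4)
      (add_mem (step true false) (step false true))
    rw [corr_succ, mean_succ F, mean_succ G]
    -- the terms `mean ^ (2k) * mean ^ (2k)` telescope between the two steps
    have regroup : ∀ p q a b c d a' b' c' d' z : MvPolynomial σ ℝ,
        p * ((a - a') + (d - d')) + q * ((b - b') + (c - c')) + (p * (a' + d') + q * (b' + c') - z)
          = p * (a + d) + q * (b + c) - z := by intros; ring
    have := add_mem (add_mem h1 h2) hs
    rwa [regroup] at this

end Cone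

/-- For `k, n ≥ 1` and `0 ≤ ρ ≤ 1 − 1/(2k)`, in the polynomial ring over ℝ
with indeterminates `F_x` (encoded `X (Sum.inl x)`) and `G_y` (encoded `X (Sum.inr y)`)
for `x, y ∈ {−1,1}ⁿ`, the polynomial
`4^{−n} Σ_{x,y} (∏ᵢ (1 + ρ xᵢ yᵢ)) F_x^{2k} G_y^{2k}
  − (2^{−n} Σₓ F_x)^{2k} (2^{−n} Σ_y G_y)^{2k}`
is a sum of squares of polynomials, each of degree at most `2k`. -/
theorem stmt_4 (k n : ℕ) (hk : 1 ≤ k) (hn : 1 ≤ n) (ρ : ℝ)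
    (hρ0 : 0 ≤ ρ) (hρ1 : ρ ≤ 1 - 1/(2*(k:ℝ))) :
    ∃ (m : ℕ) (q : Fin m → MvPolynomial ((Fin n → Bool) ⊕ (Fin n → Bool)) ℝ),
      (∀ j, (q j).totalDegree ≤ 2*k) ∧
      C (((4:ℝ)^n)⁻¹) *
          ∑ x : Fin n → Bool, ∑ y : Fin n → Bool,
            C (∏ i, (1 + ρ * sgn (x i) * sgn (y i))) *
              (X (Sum.inl x))^(2*k) * (X (Sum.inr y))^(2*k)
        - (C (((2:ℝ)^n)⁻¹) * ∑ x : Fin n → Bool, X (Sum.inl x))^(2*k) *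
            (C (((2:ℝ)^n)⁻¹) * ∑ y : Fin n → Bool, X (Sum.inr y))^(2*k)
      = ∑ j, (q j)^2 := by
  obtain ⟨m, q, hq, h⟩ := exists_fin_of_mem_sosCone (corr_sub_mem_sosCone hk hρ0 hρ1 n
    (fun x => (X (Sum.inl x) : MvPolynomial ((Fin n → Bool) ⊕ (Fin n → Bool)) ℝ))
    (fun y => X (Sum.inr y)) (fun _ => (totalDegree_X _).le) (fun _ => (totalDegree_X _).le))
  exact ⟨m, q, hq, h⟩
end

section
/- Let k ≥ 1 and 1 ≤ i ≤ k be integers and set ρ* = 1 − 1/(2k). Define Q_{k,i}(t) = (1/2 + ρ*/2)·C(2k,2i)·(1+t)^{2k−2i} + (1/2 − ρ*/2)·Σ_{j=i}^{k} C(2k,2j)·(1−t)^{2k−2j}·C(j,i)·(−4t)^{j−i}. Then Q_{k,i}(t) ≥ 0 for all real t. -/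
/-!
Write `k = i + n`. Since `C(2k,2j) C(j,i) = C(2k,2i) C(2n,2l) m_l` for `j = i + l`, with
`m_l = C(i+l,i) / C(2i+2l,2i)`, the sum in `Q_{k,i}` is
`C(2k,2i) ∑_l C(2n,2l) (1-t)^{2n-2l} (-4t)^l m_l`. It is a rescaled Gegenbauer polynomial, and it is
bounded by means of its Laplace-type integral representation: `m_l` is the `2l`-th moment of the
probability density proportional to `(1-w²)^{i-1}` on `[0,1]` (`integral_moment`).

For `t ≥ 0` the sum is therefore `C(2k,2i)` times the average over `w` of
`Re ((1-t) + 2√t w I)^{2n}`. As `|(1-t) + 2√t w I|² = (1-t)² + 4tw² ≤ (1+t)²`, this average is at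
least `-(1+t)^{2n}` (`neg_le_even_sum`). The first term of `Q_{k,i}` compensates, because
`1/2 + ρ*/2 ≥ 1/2 - ρ*/2 ≥ 0`. For `t ≤ 0` every summand is nonnegative.
-/

/-- The normalized moment `C(i+l,i) / C(2i+2l,2i)`, in factorial form. -/
noncomputable def gegMoment (i l : ℕ) : ℝ :=
  ((i + l).factorial * (2 * i).factorial * (2 * l).factorial : ℝ) /
    (i.factorial * l.factorial * (2 * i + 2 * l).factorial)

lemma gegMoment_succ_right (i l : ℕ) :
    gegMoment i (l + 1) = gegMoment i l * ((2 * l + 1) / (2 * i + 2 * l + 1)) := by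
  have h1 : 2 * (l + 1) = 2 * l + 1 + 1 := by ring
  have h2 : 2 * i + (2 * l + 1 + 1) = (2 * i + 2 * l) + 1 + 1 := by ring
  have h3 : i + (l + 1) = (i + l) + 1 := by ring
  have a1 := (2 * l).factorial_ne_zero
  have a2 := (2 * i + 2 * l).factorial_ne_zero
  have a3 := (i + l).factorial_ne_zero
  have a4 := i.factorial_ne_zero
  have a5 := l.factorial_ne_zero
  unfold gegMoment
  rw [h1, h2, h3]
  simp only [Nat.factorial_succ]
  push_cast
  field_simp
  ring

lemma gegMoment_succ_left (i l : ℕ) :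
    gegMoment (i + 1) l = gegMoment i l * ((2 * i + 1) / (2 * i + 2 * l + 1)) := by
  have h1 : 2 * (i + 1) = 2 * i + 1 + 1 := by ring
  have h2 : 2 * i + 1 + 1 + 2 * l = (2 * i + 2 * l) + 1 + 1 := by ring
  have h3 : i + 1 + l = (i + l) + 1 := by ring
  have a1 := (2 * l).factorial_ne_zero
  have a2 := (2 * i + 2 * l).factorial_ne_zero
  have a3 := (i + l).factorial_ne_zero
  have a4 := i.factorial_ne_zero
  have a5 := l.factorial_ne_zero
  unfold gegMoment
  rw [h1, h2, h3]
  simp only [Nat.factorial_succ]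
  push_cast
  field_simp
  ring

lemma gegMoment_zero_right (i : ℕ) : gegMoment i 0 = 1 := by
  have h : (i.factorial * (2 * i).factorial : ℝ) ≠ 0 := by positivity
  simpa [gegMoment] using div_self h

lemma gegMoment_zero_left (l : ℕ) : gegMoment 0 l = 1 := by
  have h : (l.factorial * (2 * l).factorial : ℝ) ≠ 0 := by positivity
  simpa [gegMoment] using div_self h

/-- The numbers `gegMoment (r+1) l` are, up to a positive normalization, the even moments of
`(1-w²)^r` on `[0,1]`. -/
lemma integral_moment (r : ℕ) : ∃ c : ℝ, 0 < c ∧ ∀ l : ℕ,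
    ∫ w in (0:ℝ)..1, w ^ (2 * l) * (1 - w ^ 2) ^ r = c * gegMoment (r + 1) l := by
  induction r with
  | zero =>
    refine ⟨1, one_pos, fun l => ?_⟩
    rw [gegMoment_succ_left, gegMoment_zero_left]
    simp
  | succ r ih =>
    obtain ⟨c, hc, h⟩ := ih
    refine ⟨c * ((2 * r + 2) / (2 * r + 3)), by positivity, fun l => ?_⟩
    have hsplit : ∀ w : ℝ, w ^ (2 * l) * (1 - w ^ 2) ^ (r + 1)
        = w ^ (2 * l) * (1 - w ^ 2) ^ r - w ^ (2 * (l + 1)) * (1 - w ^ 2) ^ r := by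
      intro w; ring
    simp only [hsplit]
    rw [intervalIntegral.integral_sub (Continuous.intervalIntegrable (by fun_prop) _ _)
      (Continuous.intervalIntegrable (by fun_prop) _ _), h, h,
      gegMoment_succ_right, gegMoment_succ_left (r + 1)]
    push_cast
    field_simp
    ring

lemma sum_range_even_odd {M : Type*} [AddCommMonoid M] (f : ℕ → M) (n : ℕ) :
    ∑ m ∈ Finset.range (2 * n + 1), f m
      = ∑ l ∈ Finset.range (n + 1), f (2 * l) + ∑ l ∈ Finset.range n, f (2 * l + 1) := by
  induction n with
  | zero => simp
  | succ n ih =>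
    rw [show 2 * (n + 1) + 1 = 2 * n + 1 + 1 + 1 by ring, Finset.sum_range_succ,
      Finset.sum_range_succ, ih, Finset.sum_range_succ _ (n + 1),
      Finset.sum_range_succ (fun l => f (2 * l + 1)) n,
      show 2 * (n + 1) = 2 * n + 1 + 1 by ring]
    abel

/-- The even part of the binomial expansion of `(u + y I)^{2n}` is its real part. -/
lemma re_pow_even (u y : ℝ) (n : ℕ) :
    (((u : ℂ) + y * Complex.I) ^ (2 * n)).re
      = ∑ l ∈ Finset.range (n + 1),
          ((2 * n).choose (2 * l) : ℝ) * u ^ (2 * n - 2 * l) * (-y ^ 2) ^ l := by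
  have hev : ∀ l : ℕ, ((y : ℂ) * Complex.I) ^ (2 * l) = (((-y ^ 2) ^ l : ℝ) : ℂ) := by
    intro l
    rw [pow_mul, mul_pow, Complex.I_sq]
    push_cast
    ring
  rw [add_comm (u : ℂ), add_pow, sum_range_even_odd, Complex.add_re, Complex.re_sum,
    Complex.re_sum]
  have hodd : ∀ l ∈ Finset.range n, (((y : ℂ) * Complex.I) ^ (2 * l + 1) *
      (u : ℂ) ^ (2 * n - (2 * l + 1)) * ((2 * n).choose (2 * l + 1) : ℂ)).re = 0 := by
    intro l _
    rw [pow_succ, hev, show (((-y ^ 2) ^ l : ℝ) : ℂ) * (y * Complex.I) *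
      (u : ℂ) ^ (2 * n - (2 * l + 1)) * ((2 * n).choose (2 * l + 1) : ℂ)
      = (((-y ^ 2) ^ l * y * u ^ (2 * n - (2 * l + 1)) * ((2 * n).choose (2 * l + 1)) : ℝ) : ℂ)
        * Complex.I by push_cast; ring]
    simp only [Complex.re_ofReal_mul, Complex.I_re, mul_zero]
  rw [Finset.sum_eq_zero hodd, add_zero]
  refine Finset.sum_congr rfl fun l _ => ?_
  rw [hev, ← Complex.ofReal_pow, ← Complex.ofReal_natCast, ← Complex.ofReal_mul,
    ← Complex.ofReal_mul, Complex.ofReal_re]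
  ring

lemma neg_le_even_sum (t w : ℝ) (ht : 0 ≤ t) (hw0 : 0 ≤ w) (hw1 : w ≤ 1) (n : ℕ) :
    -(1 + t) ^ (2 * n) ≤ ∑ l ∈ Finset.range (n + 1),
      ((2 * n).choose (2 * l) : ℝ) * (1 - t) ^ (2 * n - 2 * l) * (-4 * t) ^ l * w ^ (2 * l) := by
  have hs : (2 * √t * w) ^ 2 = 4 * t * w ^ 2 := by
    rw [mul_pow, mul_pow, Real.sq_sqrt ht]; ring
  have hre := re_pow_even (1 - t) (2 * √t * w) n
  have hsum : ∑ l ∈ Finset.range (n + 1), ((2 * n).choose (2 * l) : ℝ) *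
        (1 - t) ^ (2 * n - 2 * l) * (-4 * t) ^ l * w ^ (2 * l)
      = ((((1 - t : ℝ) : ℂ) + ((2 * √t * w : ℝ) : ℂ) * Complex.I) ^ (2 * n)).re := by
    rw [hre]
    refine Finset.sum_congr rfl fun l _ => ?_
    rw [hs, show -(4 * t * w ^ 2) = (-4 * t) * w ^ 2 by ring, mul_pow (-4 * t), pow_mul w]
    ring
  rw [hsum]
  set z : ℂ := ((1 - t : ℝ) : ℂ) + ((2 * √t * w : ℝ) : ℂ) * Complex.I with hz
  have hn : ‖z‖ ^ 2 ≤ (1 + t) ^ 2 := by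
    rw [hz, Complex.sq_norm, Complex.normSq_add_mul_I, hs]
    nlinarith [mul_nonneg ht (sub_nonneg.2 (pow_le_one₀ hw0 hw1 : w ^ 2 ≤ 1))]
  have hb : |(z ^ (2 * n)).re| ≤ (1 + t) ^ (2 * n) := by
    refine (Complex.abs_re_le_norm _).trans ?_
    rw [norm_pow, pow_mul, pow_mul]
    exact pow_le_pow_left₀ (by positivity) hn n
  exact (abs_le.1 hb).1

/-- Averaging `neg_le_even_sum` against `(1-w²)^r`. -/
lemma neg_le_moment_sum (t : ℝ) (ht : 0 ≤ t) (r n : ℕ) :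
    -(1 + t) ^ (2 * n) ≤ ∑ l ∈ Finset.range (n + 1),
      ((2 * n).choose (2 * l) : ℝ) * (1 - t) ^ (2 * n - 2 * l) * (-4 * t) ^ l
        * gegMoment (r + 1) l := by
  obtain ⟨c, hc, h⟩ := integral_moment r
  have hmono : ∫ w in (0:ℝ)..1, -(1 + t) ^ (2 * n) * (w ^ (2 * 0) * (1 - w ^ 2) ^ r)
      ≤ ∫ w in (0:ℝ)..1, ∑ l ∈ Finset.range (n + 1),
        ((2 * n).choose (2 * l) : ℝ) * (1 - t) ^ (2 * n - 2 * l) * (-4 * t) ^ l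
          * (w ^ (2 * l) * (1 - w ^ 2) ^ r) := by
    refine intervalIntegral.integral_mono_on zero_le_one
      (Continuous.intervalIntegrable (by fun_prop) _ _)
      (Continuous.intervalIntegrable (by fun_prop) _ _) fun w hw => ?_
    have hw2 : 0 ≤ (1 - w ^ 2) ^ r := pow_nonneg (sub_nonneg.2 (pow_le_one₀ hw.1 hw.2)) r
    have := mul_le_mul_of_nonneg_right (neg_le_even_sum t w ht hw.1 hw.2 n) hw2
    rw [Finset.sum_mul] at this
    simpa [mul_assoc] using this
  rw [intervalIntegral.integral_finsetSum
    (fun l _ => Continuous.intervalIntegrable (by fun_prop) _ _)] at hmono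
  simp only [intervalIntegral.integral_const_mul] at hmono
  simp only [h, gegMoment_zero_right] at hmono
  refine le_of_mul_le_mul_left ?_ hc
  rw [Finset.mul_sum]
  calc c * -(1 + t) ^ (2 * n) = -(1 + t) ^ (2 * n) * (c * 1) := by ring
    _ ≤ _ := hmono
    _ = _ := Finset.sum_congr rfl fun l _ => by ring

lemma choose_mul_choose_eq_moment (i n l : ℕ) (hl : l ≤ n) :
    ((2 * (i + n)).choose (2 * (i + l)) : ℝ) * ((i + l).choose i : ℝ)
      = ((2 * (i + n)).choose (2 * i) : ℝ) * ((2 * n).choose (2 * l) : ℝ) * gegMoment i l := by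
  obtain ⟨p, rfl⟩ := Nat.exists_eq_add_of_le hl
  rw [show 2 * (i + (l + p)) = 2 * (i + l) + 2 * p by ring, Nat.cast_add_choose,
    show 2 * (i + l) + 2 * p = 2 * i + 2 * (l + p) by ring, Nat.cast_add_choose,
    show 2 * (l + p) = 2 * l + 2 * p by ring, Nat.cast_add_choose, Nat.cast_add_choose,
    show 2 * (i + l) = 2 * i + 2 * l by ring]
  unfold gegMoment
  have a1 := (2 * l).factorial_ne_zero
  have a2 := (2 * i + 2 * l).factorial_ne_zero
  have a3 := (i + l).factorial_ne_zero
  have a4 := i.factorial_ne_zero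
  have a5 := l.factorial_ne_zero
  have a6 := (2 * p).factorial_ne_zero
  have a7 := (2 * i).factorial_ne_zero
  have a8 := (2 * l + 2 * p).factorial_ne_zero
  field_simp

/-- For `1 ≤ i ≤ k` and `ρ* = 1 − 1/(2k)`, the polynomial
`Q_{k,i}(t) = (1/2 + ρ*/2) C(2k,2i) (1+t)^{2k−2i}
            + (1/2 − ρ*/2) Σ_{j=i}^{k} C(2k,2j) (1−t)^{2k−2j} C(j,i) (−4t)^{j−i}`
is nonnegative for all real `t`. -/
theorem stmt_9 (k i : ℕ) (hk : 1 ≤ k) (hi1 : 1 ≤ i) (hik : i ≤ k) (t : ℝ) :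
    0 ≤ (1/2 + (1 - 1/(2*(k:ℝ)))/2) * ((2*k).choose (2*i) : ℝ) * (1+t)^(2*k-2*i)
      + (1/2 - (1 - 1/(2*(k:ℝ)))/2) *
        ∑ j ∈ Finset.Icc i k,
          ((2*k).choose (2*j) : ℝ) * (1-t)^(2*k-2*j) * (j.choose i : ℝ) * (-4*t)^(j-i) := by
  have hk' : (1:ℝ) ≤ k := by exact_mod_cast hk
  have hB0 : 0 ≤ 1/(2*(k:ℝ)) := by positivity
  have hB1 : 1/(2*(k:ℝ)) ≤ 1 := by
    rw [div_le_one (by positivity)]; linarith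
  have hpow : 0 ≤ (1 + t) ^ (2 * k - 2 * i) :=
    Even.pow_nonneg (by rw [← Nat.mul_sub]; exact even_two_mul _) _
  have hchoose : (0:ℝ) ≤ ((2 * k).choose (2 * i) : ℝ) := Nat.cast_nonneg _
  -- It suffices to bound the sum below by minus the first term without its prefactor.
  suffices hS : -(((2 * k).choose (2 * i) : ℝ) * (1 + t) ^ (2 * k - 2 * i)) ≤
      ∑ j ∈ Finset.Icc i k,
        ((2*k).choose (2*j) : ℝ) * (1-t)^(2*k-2*j) * (j.choose i : ℝ) * (-4*t)^(j-i) by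
    have hX := mul_nonneg hchoose hpow
    have h1 := mul_le_mul_of_nonneg_left hS
      (show 0 ≤ 1/2 - (1 - 1/(2*(k:ℝ)))/2 by linarith)
    have h2 := mul_nonneg (sub_nonneg.2 hB1) hX
    rw [mul_assoc]
    nlinarith
  rcases le_total t 0 with ht | ht
  · refine (neg_nonpos.2 (mul_nonneg hchoose hpow)).trans (Finset.sum_nonneg fun j _ => ?_)
    have h1 : 0 ≤ 1 - t := by linarith
    have h2 : 0 ≤ -4 * t := by linarith
    positivity
  · obtain ⟨n, rfl⟩ := Nat.exists_eq_add_of_le hik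
    obtain ⟨r, rfl⟩ := Nat.exists_eq_add_of_le' hi1
    have hsum : ∑ j ∈ Finset.Icc (r + 1) (r + 1 + n), ((2*(r+1+n)).choose (2*j) : ℝ) *
          (1-t)^(2*(r+1+n)-2*j) * (j.choose (r+1) : ℝ) * (-4*t)^(j-(r+1))
        = ((2 * (r + 1 + n)).choose (2 * (r + 1)) : ℝ) * ∑ l ∈ Finset.range (n + 1),
          ((2 * n).choose (2 * l) : ℝ) * (1 - t) ^ (2 * n - 2 * l) * (-4 * t) ^ l
            * gegMoment (r + 1) l := by
      rw [← Finset.Ico_add_one_right_eq_Icc, Finset.sum_Ico_eq_sum_range,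
        show r + 1 + n + 1 - (r + 1) = n + 1 by omega, Finset.mul_sum]
      refine Finset.sum_congr rfl fun l hl => ?_
      have hl' : l ≤ n := Nat.lt_succ_iff.1 (Finset.mem_range.1 hl)
      have hc := choose_mul_choose_eq_moment (r + 1) n l hl'
      rw [show 2 * (r + 1 + n) - 2 * (r + 1 + l) = 2 * n - 2 * l by omega,
        show r + 1 + l - (r + 1) = l by omega]
      linear_combination (1 - t) ^ (2 * n - 2 * l) * (-4 * t) ^ l * hc
    rw [hsum, show 2 * (r + 1 + n) - 2 * (r + 1) = 2 * n by omega, ← mul_neg]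
    exact mul_le_mul_of_nonneg_left (neg_le_moment_sum t ht r n) hchoose
end

section
/- There exist universal constants C > 0 and c > 0 with the following property. Let n ≥ 2 be an integer and let γ be a real number with 1/log n ≤ γ ≤ 1/2 such that d = (1−γ)n is an even integer. Let V = {−1,1}ⁿ and consider the polynomial ring ℝ[{f_x : x ∈ V}]. Then there exist polynomials σ₀ and σ₁, each a sum of squares of polynomials, together with polynomials λ_x for each x ∈ V and polynomials μ_{x,y} for each pair x, y ∈ V at Hamming distance exactly d, such that −1 = σ₀ + σ₁·(2^{−n} Σ_{x∈V} f_x − C·n^{−γ/10}) + Σ_{x∈V} λ_x·(f_x² − f_x) + Σ_{x,y : dist(x,y)=d} μ_{x,y}·f_x f_y, where every summand on the right-hand side has total degree at most c/γ. -/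
/-!
The proof compares the quadratic form of the distance-`d` graph with that of a noise operator, for
which reverse hypercontractivity has a sum-of-squares proof.

Let `F_S` be the Fourier coefficients of the formal function `x ↦ f_x`; they are linear forms in the
variables. The form `∑ K_d(|S|) / (n choose d) * F_S ^ 2`, with `K_d` the Krawtchouk numbers, is a
combination of the edge monomials `f_x f_y`, `dist(x, y) = d` (`kraw_quad`). With `θ = 2γ - 1`, its
eigenvalue at level `k` is at least `θ ^ k + θ ^ (n - k) - ε`, where `ε = 34 / (γ² n)` (`eig`):
since `d` is even the spectrum is symmetric under `k ↦ n - k`, near the ends the three-term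
recurrence keeps it close to `θ ^ k`, and in the middle both sides are small. Hence
`∑ (ε + λ_S - τ_S) F_S ^ 2` is a sum of squares, where `λ` is the spectrum of the graph operator and
`τ_S = θ ^ |S| + θ ^ (n - |S|)`.

The operator with spectrum `τ` is twice the noise operator of correlation `θ` on each of the two
parity classes. Composing with the antipodal map makes the correlation `1 - 2γ` positive, and the
Boolean equations allow `f_x` to be replaced by `f_x ^ (2(k+1))`. Reverse hypercontractivity
(`hypercontractive`) then bounds the form below, in degree `p = 4(k+1) ≈ 1/γ`, by the `p`-th powers
of the averages over the classes, hence by `4 * 2 ^ (-p)` times the `p`-th power of the average of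
`f` (`tau_bound`). The two-point inequality behind it (`two_point`) follows from a second-order
Jensen inequality and Bernoulli's inequality, both with explicit sum-of-squares proofs by induction,
and it tensorizes coordinate by coordinate.

Finally `∑ F_S ^ 2` equals the average of `f` modulo the Boolean equations, and Bernoulli's
inequality replaces the `p`-th power of the average `avg` by its tangent at `a = C n ^ (-γ/10)`.
Modulo the Boolean and edge equations, zero is then a sum of squares plus a nonnegative multiple of
`avg - a` plus the constant `a * (4 * 2 ^ (-p) * a ^ (p - 1) - ε)`. The constant is positive because
`γ ≥ 1 / log n` gives `ε = O(n ^ (-1/2))`, and dividing by it yields the refutation.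
-/

open MvPolynomial

namespace FranklRodl

variable {σ : Type*}

/-! ### Sums of squares of bounded degree -/

/-- The cone of sums of squares of real polynomials `q` with `2 * deg q ≤ D`. -/
noncomputable def sosCone (σ : Type*) (D : ℕ) : AddSubmonoid (MvPolynomial σ ℝ) :=
  AddSubmonoid.closure {p | ∃ q : MvPolynomial σ ℝ, p = q ^ 2 ∧ 2 * q.totalDegree ≤ D}

lemma sos_sq {D : ℕ} {q : MvPolynomial σ ℝ} (h : 2 * q.totalDegree ≤ D) :
    q ^ 2 ∈ sosCone σ D :=
  AddSubmonoid.subset_closure ⟨q, rfl, h⟩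

lemma sos_mono {D D' : ℕ} (h : D ≤ D') : sosCone σ D ≤ sosCone σ D' :=
  AddSubmonoid.closure_mono fun _ ⟨q, hq, hd⟩ => ⟨q, hq, hd.trans h⟩

lemma sos_mul {D D' : ℕ} {p p' : MvPolynomial σ ℝ} (h : p ∈ sosCone σ D)
    (h' : p' ∈ sosCone σ D') : p * p' ∈ sosCone σ (D + D') := by
  unfold sosCone at h h'
  induction h using AddSubmonoid.closure_induction with
  | mem x hx =>
    obtain ⟨q, rfl, hq⟩ := hx
    induction h' using AddSubmonoid.closure_induction with
    | mem y hy =>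
      obtain ⟨r, rfl, hr⟩ := hy
      rw [← mul_pow]
      exact sos_sq (by have := totalDegree_mul q r; omega)
    | zero => simp
    | add y z _ _ h1 h2 => rw [mul_add]; exact add_mem h1 h2
  | zero => simp
  | add x y _ _ h1 h2 => rw [add_mul]; exact add_mem h1 h2

lemma sos_smul {D : ℕ} {p : MvPolynomial σ ℝ} {c : ℝ} (hc : 0 ≤ c) (h : p ∈ sosCone σ D) :
    c • p ∈ sosCone σ D := by
  have h1 : (C (Real.sqrt c) : MvPolynomial σ ℝ) ^ 2 ∈ sosCone σ 0 := sos_sq (by simp)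
  have h2 := sos_mul h1 h
  rwa [← C_pow, Real.sq_sqrt hc, ← smul_eq_C_mul, zero_add] at h2

lemma sos_pow_even {e : ℕ} {u : MvPolynomial σ ℝ} (h : u.totalDegree ≤ e) (k : ℕ) :
    u ^ (2 * k) ∈ sosCone σ (2 * k * e) := by
  rw [mul_comm 2 k, pow_mul]
  refine sos_sq ?_
  have := totalDegree_pow u k
  have h2 : k * u.totalDegree ≤ k * e := Nat.mul_le_mul_left _ h
  calc 2 * (u ^ k).totalDegree ≤ 2 * (k * e) := by omega
    _ = k * 2 * e := by ring

lemma sos_totalDegree {D : ℕ} {p : MvPolynomial σ ℝ} (h : p ∈ sosCone σ D) :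
    p.totalDegree ≤ D := by
  unfold sosCone at h
  induction h using AddSubmonoid.closure_induction with
  | mem x hx =>
    obtain ⟨q, rfl, hq⟩ := hx
    exact (totalDegree_pow q 2).trans hq
  | zero => simp
  | add x y _ _ h1 h2 => exact (totalDegree_add x y).trans (max_le h1 h2)

lemma sos_exists {D : ℕ} {p : MvPolynomial σ ℝ} (h : p ∈ sosCone σ D) :
    ∃ (m : ℕ) (q : Fin m → MvPolynomial σ ℝ), p = ∑ j, (q j) ^ 2 := by
  unfold sosCone at h
  induction h using AddSubmonoid.closure_induction with
  | mem x hx =>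
    obtain ⟨q, rfl, -⟩ := hx
    exact ⟨1, fun _ => q, by simp⟩
  | zero => exact ⟨0, Fin.elim0, by simp⟩
  | add x y _ _ h1 h2 =>
    obtain ⟨m, q, rfl⟩ := h1
    obtain ⟨m', q', rfl⟩ := h2
    exact ⟨m + m', Fin.append q q', by simp [Fin.sum_univ_add]⟩

/-! ### Two-point inequalities -/

/-- Second-order Jensen inequality for `t ↦ t ^ (2 * (k + 1))`, with an odd companion that makes the
induction on `k` close: each is multiplied by `m ^ 2 + δ ^ 2`, and the cross terms of one are
supplied by the other. -/
lemma jensen_aux {e : ℕ} {m δ : MvPolynomial σ ℝ} (hm : m.totalDegree ≤ e)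
    (hδ : δ.totalDegree ≤ e) (k : ℕ) :
    ((1 / 2 : ℝ) • ((m + δ) ^ (2 * (k + 1)) + (m - δ) ^ (2 * (k + 1))) - m ^ (2 * (k + 1))
      - ((k + 1) * (2 * k + 1) : ℝ) • (m ^ (2 * k) * δ ^ 2) ∈ sosCone σ (2 * (k + 1) * e)) ∧
    (m * δ * ((1 / 2 : ℝ) • ((m + δ) ^ (2 * (k + 1)) - (m - δ) ^ (2 * (k + 1))))
      - (2 * (k + 1) : ℝ) • (m ^ (2 * (k + 1)) * δ ^ 2) ∈ sosCone σ (2 * (k + 2) * e)) := by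
  have hm2 : m ^ 2 ∈ sosCone σ (2 * e) := sos_sq (by omega)
  have hδ2 : δ ^ 2 ∈ sosCone σ (2 * e) := sos_sq (by omega)
  have hs : m ^ 2 + δ ^ 2 ∈ sosCone σ (2 * e) := add_mem hm2 hδ2
  induction k with
  | zero =>
    constructor
    · convert (sosCone σ _).zero_mem using 1
      simp
      algebra
    · convert (sosCone σ _).zero_mem using 1
      simp
      algebra
  | succ k ih =>
    obtain ⟨h1, h2⟩ := ih
    have hmk : m ^ (2 * k) ∈ sosCone σ (2 * k * e) := sos_pow_even hm k
    constructor
    · have t1 := sos_mul hs h1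
      have t2 := sos_smul (c := 2) (by norm_num) h2
      have t3 := sos_smul (c := (k + 1) * (2 * k + 1)) (by positivity)
        (sos_mul hmk (sos_mul hδ2 hδ2))
      have e1 : 2 * e + 2 * (k + 1) * e = 2 * (k + 1 + 1) * e := by ring
      have e2 : 2 * (k + 2) * e = 2 * (k + 1 + 1) * e := by ring
      have e3 : 2 * k * e + (2 * e + 2 * e) = 2 * (k + 1 + 1) * e := by ring
      rw [e1] at t1; rw [e2] at t2; rw [e3] at t3
      convert add_mem (add_mem t1 t2) t3 using 1
      push_cast
      algebra
    · have t1 := sos_mul hs h2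
      have t2 := sos_smul (c := 2) (by norm_num) (sos_mul hm2 (sos_mul hδ2 h1))
      have t3 := sos_smul (c := 2 * (k + 1) + 2 * ((k + 1) * (2 * k + 1))) (by positivity)
        (sos_mul (sos_mul hmk hm2) (sos_mul hδ2 hδ2))
      have e1 : 2 * e + 2 * (k + 2) * e = 2 * (k + 1 + 2) * e := by ring
      have e2 : 2 * e + (2 * e + 2 * (k + 1) * e) = 2 * (k + 1 + 2) * e := by ring
      have e3 : 2 * k * e + 2 * e + (2 * e + 2 * e) = 2 * (k + 1 + 2) * e := by ring
      rw [e1] at t1; rw [e2] at t2; rw [e3] at t3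
      convert add_mem (add_mem t1 t2) t3 using 1
      push_cast
      algebra

/-- Convexity of `t ↦ t ^ (2 * (k + 1))` at the midpoint. -/
lemma jensen {e : ℕ} {m δ : MvPolynomial σ ℝ} (hm : m.totalDegree ≤ e)
    (hδ : δ.totalDegree ≤ e) (k : ℕ) :
    (1 / 2 : ℝ) • ((m + δ) ^ (2 * (k + 1)) + (m - δ) ^ (2 * (k + 1))) - m ^ (2 * (k + 1))
      ∈ sosCone σ (2 * (k + 1) * e) := by
  have h1 := (jensen_aux hm hδ k).1
  have h2 := sos_smul (c := (k + 1) * (2 * k + 1)) (by positivity)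
        (sos_mul (sos_pow_even hm k) (sos_sq (D := 2 * e) (q := δ) (by omega)))
  rw [show 2 * k * e + 2 * e = 2 * (k + 1) * e by ring] at h2
  convert add_mem h1 h2 using 1
  ring

/-- Bernoulli's inequality in homogeneous form:
`w ^ (2k) ≥ u ^ (2k) + 2k u ^ (2k-1) (w - u)`, with `2k` written as `2 * (k + 1)`. -/
lemma bernoulli {e : ℕ} {w u : MvPolynomial σ ℝ} (hw : w.totalDegree ≤ e)
    (hu : u.totalDegree ≤ e) (k : ℕ) :
    w ^ (2 * (k + 1)) - u ^ (2 * (k + 1)) - (2 * (k + 1) : ℝ) • (u ^ (2 * k + 1) * (w - u))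
      ∈ sosCone σ (2 * (k + 1) * e) := by
  have hu2 : u ^ 2 ∈ sosCone σ (2 * e) := sos_sq (by omega)
  have hwu : (w - u) ^ 2 ∈ sosCone σ (2 * e) :=
    sos_sq (by have := totalDegree_sub w u; have := max_le hw hu; omega)
  have hwu' : (w + u) ^ 2 ∈ sosCone σ (2 * e) :=
    sos_sq (by have := totalDegree_add w u; have := max_le hw hu; omega)
  suffices h : (w ^ (2 * (k + 1)) - u ^ (2 * (k + 1))
        - (2 * (k + 1) : ℝ) • (u ^ (2 * k + 1) * (w - u)) ∈ sosCone σ (2 * (k + 1) * e)) ∧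
      ((w - u) * (w ^ (2 * (k + 1)) * (w + u) - 2 * u ^ (2 * (k + 1) + 1))
        ∈ sosCone σ (2 * (k + 2) * e)) from h.1
  induction k with
  | zero =>
    constructor
    · convert hwu using 1
      simp
      algebra
    · have t1 := sos_mul hu2 hwu
      have t2 := sos_mul hwu hwu'
      rw [show 2 * e + 2 * e = 2 * (0 + 2) * e by ring] at t1 t2
      convert add_mem t1 t2 using 1
      ring
  | succ k ih =>
    obtain ⟨h1, h2⟩ := ih
    constructor
    · have t1 := sos_mul hu2 h1
      rw [show 2 * e + 2 * (k + 1) * e = 2 * (k + 2) * e by ring] at t1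
      convert add_mem t1 h2 using 1
      push_cast
      algebra
    · have t1 := sos_mul hu2 h2
      have t2 := sos_mul (sos_pow_even hw (k + 1)) (sos_mul hwu hwu')
      rw [show 2 * e + 2 * (k + 2) * e = 2 * (k + 1 + 2) * e by ring] at t1
      rw [show 2 * (k + 1) * e + (2 * e + 2 * e) = 2 * (k + 1 + 2) * e by ring] at t2
      convert add_mem t1 t2 using 1
      ring

/-- The two-point reverse hypercontractive inequality, as a sum-of-squares identity.  A function on
`{−1,1}` is given by its mean and its difference part, so `f = u ± v` and `g = s ± t`; the
correlation is `ρ = 1 - η` and the exponent `2k` is written `2 * (k + 1)`. -/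
lemma two_point {u v s t : MvPolynomial σ ℝ} (hu : u.totalDegree ≤ 1) (hv : v.totalDegree ≤ 1)
    (hs : s.totalDegree ≤ 1) (ht : t.totalDegree ≤ 1) (k : ℕ) {η : ℝ}
    (hη : 1 ≤ η * (2 * (k + 1))) (hη1 : η ≤ 1) :
    ((2 - η) / 4) • ((u + v) ^ (2 * (k + 1)) * (s + t) ^ (2 * (k + 1))
        + (u - v) ^ (2 * (k + 1)) * (s - t) ^ (2 * (k + 1)))
      + (η / 4) • ((u + v) ^ (2 * (k + 1)) * (s - t) ^ (2 * (k + 1))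
        + (u - v) ^ (2 * (k + 1)) * (s + t) ^ (2 * (k + 1)))
      - u ^ (2 * (k + 1)) * s ^ (2 * (k + 1)) ∈ sosCone σ (4 * (k + 1)) := by
  have hη0 : 0 ≤ η := by
    by_contra h
    have : η * (2 * ((k : ℝ) + 1)) ≤ 0 :=
      mul_nonpos_of_nonpos_of_nonneg (by linarith) (by positivity)
    linarith
  have dm : ∀ {p q : MvPolynomial σ ℝ}, p.totalDegree ≤ 1 → q.totalDegree ≤ 1 →
      (p * q).totalDegree ≤ 2 := fun {p q} hp hq => by
    have := totalDegree_mul p q; omega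
  have da : ∀ {p q : MvPolynomial σ ℝ}, p.totalDegree ≤ 2 → q.totalDegree ≤ 2 →
      (p + q).totalDegree ≤ 2 := fun {p q} hp hq => (totalDegree_add p q).trans (max_le hp hq)
  have E1 : 2 * (k + 1) * 2 = 4 * (k + 1) := by ring
  have E2 : 2 * (k + 1) * 1 + 2 * (k + 1) * 1 = 4 * (k + 1) := by ring
  have E3 : 2 * k * 2 + 4 = 4 * (k + 1) := by ring
  -- the part of the noise that keeps the coordinate
  have J := sos_smul (sub_nonneg.2 hη1)
    (jensen (da (dm hu hs) (dm hv ht)) (da (dm hu ht) (dm hv hs)) k)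
  have B := sos_smul (sub_nonneg.2 hη1) (bernoulli (da (dm hu hs) (dm hv ht)) (dm hu hs) k)
  rw [E1] at J B
  -- the part of the noise that resamples the coordinate
  have A1 := (jensen_aux hu hv k).1
  have A2 := (jensen_aux hs ht k).1
  have A1' := jensen hs ht k
  have S2 : s ^ (2 * (k + 1)) ∈ sosCone σ (2 * (k + 1) * 1) := sos_pow_even hs (k + 1)
  have U2 : u ^ (2 * (k + 1)) + ((k + 1) * (2 * k + 1) : ℝ) • (u ^ (2 * k) * v ^ 2)
      ∈ sosCone σ (2 * (k + 1) * 1) := by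
    refine add_mem (sos_pow_even hu (k + 1)) (sos_smul (by positivity) ?_)
    have := sos_mul (sos_pow_even hu k) (sos_sq (D := 2) (q := v) (by omega))
    rwa [show 2 * k * 1 + 2 = 2 * (k + 1) * 1 by ring] at this
  have P1 := sos_smul hη0 (sos_mul A1 (add_mem A1' S2))
  have P2 := sos_smul hη0 (sos_mul U2 A2)
  rw [E2] at P1 P2
  -- the second-order terms absorb the linear term of `B`
  have W : (u * s) ^ (2 * k) ∈ sosCone σ (2 * k * 2) := sos_pow_even (dm hu hs) k
  have sq2 : ∀ {p : MvPolynomial σ ℝ}, p.totalDegree ≤ 2 → p ^ 2 ∈ sosCone σ 4 :=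
    fun {p} hp => sos_sq (by omega)
  have R1 := sos_mul W (sos_smul (c := (k + 1) * (η * (2 * (k + 1)) - 1))
    (mul_nonneg (by positivity) (by linarith)) (add_mem (sq2 (dm hu ht)) (sq2 (dm hv hs))))
  have R2 := sos_mul W (sos_smul (c := (1 - η) * (k + 1))
    (mul_nonneg (by linarith) (by positivity)) (sq2 (da (dm hu ht) (dm hv hs))))
  have R3 := sos_mul W (sos_smul (c := η * ((k + 1) * (2 * k + 1)) ^ 2) (by positivity)
    (sq2 (dm hv ht)))
  rw [E3] at R1 R2 R3
  convert add_mem (add_mem (add_mem J B) (add_mem P1 P2)) (add_mem (add_mem R1 R2) R3) using 1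
  have F1 : (u + v) * (s + t) = u * s + v * t + (u * t + v * s) := by ring
  have F2 : (u - v) * (s - t) = u * s + v * t - (u * t + v * s) := by ring
  simp only [← mul_pow, ← F1, ← F2]
  generalize (u * s + v * t) ^ (2 * (k + 1)) = Z
  simp only [mul_pow]
  generalize (u + v) ^ (2 * (k + 1)) = a1
  generalize (u - v) ^ (2 * (k + 1)) = a2
  generalize (s + t) ^ (2 * (k + 1)) = b1
  generalize (s - t) ^ (2 * (k + 1)) = b2
  algebra

/-! ### Reverse hypercontractivity on the cube -/

/-- The probability of `(b, c)` when `b` is a uniform bit and `c` is a copy of `b` that is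
resampled with probability `η`. -/
noncomputable def wt (η : ℝ) (b c : Bool) : ℝ := if b = c then (2 - η) / 4 else η / 4

lemma wt_nonneg {η : ℝ} (h0 : 0 ≤ η) (h1 : η ≤ 1) (b c : Bool) : 0 ≤ wt η b c := by
  unfold wt; split_ifs <;> linarith

lemma sum_cons {M : Type*} [AddCommMonoid M] {n : ℕ} (h : (Fin (n + 1) → Bool) → M) :
    ∑ x, h x = ∑ x : Fin n → Bool, (h (Fin.cons true x) + h (Fin.cons false x)) := by
  rw [← (Fin.consEquiv (fun _ => Bool)).sum_comp h, Fintype.sum_prod_type]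
  simp only [Fintype.univ_bool, Finset.mem_singleton, Bool.true_eq_false, not_false_eq_true,
    Finset.sum_insert, Finset.sum_singleton, Finset.sum_add_distrib]
  rfl

lemma deg_smul {p : MvPolynomial σ ℝ} {D : ℕ} (c : ℝ) (h : p.totalDegree ≤ D) :
    (c • p).totalDegree ≤ D := (totalDegree_smul_le c p).trans h

/-- Reverse hypercontractivity: if `1 / (2(k+1)) ≤ η ≤ 1` and `(x, y)` is `(1 - η)`-correlated, then
`E[f(x)^(2(k+1)) g(y)^(2(k+1))] - E[f]^(2(k+1)) E[g]^(2(k+1))` is a sum of squares. The two-point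
inequality tensorizes because the averages of `f` and `g` over one coordinate are again linear. -/
lemma hypercontractive (k : ℕ) {η : ℝ} (hη : 1 ≤ η * (2 * (k + 1))) (hη0 : 0 ≤ η) (hη1 : η ≤ 1)
    {n : ℕ} (f g : (Fin n → Bool) → MvPolynomial σ ℝ) (hf : ∀ x, (f x).totalDegree ≤ 1)
    (hg : ∀ x, (g x).totalDegree ≤ 1) :
    ∑ x, ∑ y, (∏ i, wt η (x i) (y i)) • (f x ^ (2 * (k + 1)) * g y ^ (2 * (k + 1)))
      - (((2 : ℝ) ^ n)⁻¹ • ∑ x, f x) ^ (2 * (k + 1)) * (((2 : ℝ) ^ n)⁻¹ • ∑ x, g x) ^ (2 * (k + 1))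
      ∈ sosCone σ (4 * (k + 1)) := by
  induction n with
  | zero => simp
  | succ n ih =>
    have dadd : ∀ {p q : MvPolynomial σ ℝ}, p.totalDegree ≤ 1 → q.totalDegree ≤ 1 →
        (p + q).totalDegree ≤ 1 := fun {p q} hp hq => (totalDegree_add p q).trans (max_le hp hq)
    have dsub : ∀ {p q : MvPolynomial σ ℝ}, p.totalDegree ≤ 1 → q.totalDegree ≤ 1 →
        (p - q).totalDegree ≤ 1 := fun {p q} hp hq => (totalDegree_sub p q).trans (max_le hp hq)
    have h1 := ih (fun x => (1 / 2 : ℝ) • (f (Fin.cons true x) + f (Fin.cons false x)))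
      (fun x => (1 / 2 : ℝ) • (g (Fin.cons true x) + g (Fin.cons false x)))
      (fun x => deg_smul _ (dadd (hf _) (hf _))) (fun x => deg_smul _ (dadd (hg _) (hg _)))
    have h2 : ∑ x : Fin n → Bool, ∑ y : Fin n → Bool, (∏ i, wt η (x i) (y i)) • _
        ∈ sosCone σ (4 * (k + 1)) :=
      sum_mem fun x _ => sum_mem fun y _ =>
      sos_smul (Finset.prod_nonneg fun i _ => wt_nonneg hη0 hη1 (x i) (y i))
      (two_point (u := (1 / 2 : ℝ) • (f (Fin.cons true x) + f (Fin.cons false x)))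
        (v := (1 / 2 : ℝ) • (f (Fin.cons true x) - f (Fin.cons false x)))
        (s := (1 / 2 : ℝ) • (g (Fin.cons true y) + g (Fin.cons false y)))
        (t := (1 / 2 : ℝ) • (g (Fin.cons true y) - g (Fin.cons false y)))
        (deg_smul _ (dadd (hf _) (hf _))) (deg_smul _ (dsub (hf _) (hf _)))
        (deg_smul _ (dadd (hg _) (hg _))) (deg_smul _ (dsub (hg _) (hg _))) k hη hη1)
    convert add_mem h2 h1 using 1
    have hA : ∀ f : (Fin (n + 1) → Bool) → MvPolynomial σ ℝ, ((2 : ℝ) ^ n)⁻¹ • ∑ x : Fin n → Bool,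
        (1 / 2 : ℝ) • (f (Fin.cons true x) + f (Fin.cons false x))
        = ((2 : ℝ) ^ (n + 1))⁻¹ • ∑ x, f x := fun f => by
      rw [sum_cons f, ← Finset.smul_sum, smul_smul]
      congr 1
      field_simp
      ring
    rw [hA, hA]
    simp only [smul_sub, Finset.sum_sub_distrib]
    rw [sum_cons]
    simp only [sum_cons (n := n), Fin.prod_univ_succ, Fin.cons_zero, Fin.cons_succ,
      ← Finset.sum_add_distrib]
    rw [sub_add_sub_cancel]
    congr 1
    refine Finset.sum_congr rfl fun x _ => Finset.sum_congr rfl fun y _ => ?_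
    simp only [wt, if_true, Bool.true_eq_false, Bool.false_eq_true, if_false]
    algebra

/-! ### Fourier analysis of kernels on the cube -/

/-- The bit `b` as a sign. -/
noncomputable def sgn (b : Bool) : ℝ := if b then -1 else 1

/-- The Walsh character indexed by `S`. -/
noncomputable def chi {n : ℕ} (S : Finset (Fin n)) (x : Fin n → Bool) : ℝ := ∏ i ∈ S, sgn (x i)

/-- The Fourier coefficient of the formal function `x ↦ f_x`, a linear form in the variables. -/
noncomputable def four {n : ℕ} (S : Finset (Fin n)) : MvPolynomial (Fin n → Bool) ℝ :=
  ((2 : ℝ) ^ n)⁻¹ • ∑ x, chi S x • X x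

/-- The Krawtchouk number `K_d(k)`, as a coefficient of its generating function. -/
noncomputable def kraw (n d k : ℕ) : ℝ :=
  (((1 : Polynomial ℝ) - Polynomial.X) ^ k * (1 + Polynomial.X) ^ (n - k)).coeff d

lemma sgn_mul_sgn (b c : Bool) : sgn b * sgn c = if b = c then 1 else -1 := by
  cases b <;> cases c <;> simp [sgn]

/-- Expansion of a product kernel in characters. -/
lemma kernel_expand {A : Type*} [CommRing A] [Algebra ℝ A] {n : ℕ} (a b : A)
    (x y : Fin n → Bool) :
    ∑ S : Finset (Fin n), (chi S x * chi S y) • (a ^ S.card * b ^ (n - S.card))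
      = ∏ i, ((sgn (x i) * sgn (y i)) • a + b) := by
  rw [Fintype.prod_add]
  refine Finset.sum_congr rfl fun S _ => ?_
  rw [chi, chi, ← Finset.prod_mul_distrib, Finset.prod_smul, Finset.prod_const, Finset.prod_const,
    Finset.card_compl, Fintype.card_fin, smul_mul_assoc]

lemma kernel_expand_real {n : ℕ} (a b : ℝ) (x y : Fin n → Bool) :
    ∑ S : Finset (Fin n), (a ^ S.card * b ^ (n - S.card)) * (chi S x * chi S y)
      = ∏ i, ((sgn (x i) * sgn (y i)) * a + b) := by
  have h := kernel_expand (A := ℝ) a b x y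
  simp only [smul_eq_mul] at h
  rw [← h]
  exact Finset.sum_congr rfl fun S _ => mul_comm _ _

/-- The indicator of distance `d` has Fourier coefficients given by Krawtchouk numbers. -/
lemma kraw_expand {n : ℕ} (d : ℕ) (x y : Fin n → Bool) :
    ∑ S : Finset (Fin n), kraw n d S.card * (chi S x * chi S y)
      = if hammingDist x y = d then (2 : ℝ) ^ n else 0 := by
  have h := congrArg (fun p : Polynomial ℝ => p.coeff d)
    (kernel_expand ((1 : Polynomial ℝ) - Polynomial.X) (1 + Polynomial.X) x y)
  have hprod : ∏ i, ((sgn (x i) * sgn (y i)) • ((1 : Polynomial ℝ) - Polynomial.X)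
      + (1 + Polynomial.X)) = Polynomial.C ((2 : ℝ) ^ n) * Polynomial.X ^ hammingDist x y := by
    have : ∀ i, (sgn (x i) * sgn (y i)) • ((1 : Polynomial ℝ) - Polynomial.X)
        + (1 + Polynomial.X) = Polynomial.C (2 : ℝ) * if x i ≠ y i then Polynomial.X else 1 := by
      intro i
      rw [sgn_mul_sgn, map_ofNat]
      by_cases hxy : x i = y i
      · simp [hxy]
        norm_num
      · simp [hxy]
        ring
    rw [Finset.prod_congr rfl fun i _ => this i, Finset.prod_mul_distrib, Finset.prod_ite]
    simp [hammingDist]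
  simp only [hprod, Polynomial.coeff_C_mul_X_pow, Polynomial.finsetSum_coeff,
    Polynomial.coeff_smul, smul_eq_mul] at h
  rw [show (if hammingDist x y = d then (2 : ℝ) ^ n else 0)
    = if d = hammingDist x y then (2 : ℝ) ^ n else 0 by simp only [eq_comm], ← h]
  exact Finset.sum_congr rfl fun S _ => by rw [kraw, mul_comm]

/-- A quadratic form diagonal in Fourier coefficients, written with its kernel on the cube. -/
lemma four_quad {n : ℕ} (c : Finset (Fin n) → ℝ) :
    ∑ S, c S • (four S) ^ 2 = ((4 : ℝ) ^ n)⁻¹ • ∑ x : Fin n → Bool, ∑ y : Fin n → Bool,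
      (∑ S, c S * (chi S x * chi S y)) • (X x * X y : MvPolynomial (Fin n → Bool) ℝ) := by
  have h4 : ((4 : ℝ) ^ n)⁻¹ = ((2 : ℝ) ^ n)⁻¹ * ((2 : ℝ) ^ n)⁻¹ := by
    rw [← mul_inv, ← mul_pow]; norm_num
  have : ∀ S : Finset (Fin n), c S • (four S) ^ 2 = ((4 : ℝ) ^ n)⁻¹ • ∑ x : Fin n → Bool,
      ∑ y : Fin n → Bool, (c S * (chi S x * chi S y)) •
        (X x * X y : MvPolynomial (Fin n → Bool) ℝ) := by
    intro S
    rw [four, sq, smul_mul_smul_comm, ← h4, smul_comm, Finset.sum_mul_sum, Finset.smul_sum]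
    congr 1
    refine Finset.sum_congr rfl fun x _ => ?_
    rw [Finset.smul_sum]
    refine Finset.sum_congr rfl fun y _ => ?_
    rw [smul_mul_smul_comm, smul_smul]
  rw [Finset.sum_congr rfl fun S _ => this S, ← Finset.smul_sum, Finset.sum_comm]
  congr 1
  refine Finset.sum_congr rfl fun x _ => ?_
  rw [Finset.sum_comm]
  exact Finset.sum_congr rfl fun y _ => by rw [Finset.sum_smul]

lemma parseval {n : ℕ} :
    ∑ S, (four S) ^ 2 = ((2 : ℝ) ^ n)⁻¹ •
      ∑ x : Fin n → Bool, (X x : MvPolynomial (Fin n → Bool) ℝ) ^ 2 := by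
  have h := four_quad (n := n) (fun _ => 1)
  have hk : ∀ x y : Fin n → Bool, ∑ S : Finset (Fin n), (1 : ℝ) * (chi S x * chi S y)
      = if x = y then (2 : ℝ) ^ n else 0 := by
    intro x y
    have := kernel_expand_real 1 1 x y
    simp only [one_pow, mul_one, one_mul] at this ⊢
    rw [this]
    split_ifs with hxy
    · subst hxy
      simp [sgn_mul_sgn]
      norm_num
    · obtain ⟨i, hi⟩ := Function.ne_iff.1 hxy
      exact Finset.prod_eq_zero (Finset.mem_univ i) (by simp [sgn_mul_sgn, hi])
  simp only [hk, one_smul, ite_smul, zero_smul, Finset.sum_ite_eq, Finset.mem_univ, if_true] at h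
  rw [h, ← Finset.smul_sum, smul_smul]
  congr 1
  · rw [show (4 : ℝ) = 2 * 2 by norm_num, mul_pow]
    field_simp
  · exact Finset.sum_congr rfl fun x _ => (sq _).symm

/-- The quadratic form of the distance-`d` operator is supported on the edges `f_x f_y`. -/
lemma kraw_quad {n : ℕ} (d : ℕ) (N : ℝ) :
    ∑ S : Finset (Fin n), (kraw n d S.card / N) • (four S) ^ 2
      = ∑ p ∈ Finset.univ.filter (fun p : (Fin n → Bool) × (Fin n → Bool) =>
          hammingDist p.1 p.2 = d), C (((2 : ℝ) ^ n)⁻¹ / N) * X p.1 * X p.2 := by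
  rw [four_quad, Finset.sum_filter, Fintype.sum_prod_type, Finset.smul_sum]
  refine Finset.sum_congr rfl fun x _ => ?_
  rw [Finset.smul_sum]
  refine Finset.sum_congr rfl fun y _ => ?_
  have : ∑ S : Finset (Fin n), kraw n d S.card / N * (chi S x * chi S y)
      = (if hammingDist x y = d then (2 : ℝ) ^ n else 0) / N := by
    rw [← kraw_expand, Finset.sum_div]
    exact Finset.sum_congr rfl fun S _ => by ring
  rw [this]
  split_ifs with h
  · rw [smul_smul, mul_assoc, ← smul_eq_C_mul]
    congr 1
    rw [show (4 : ℝ) = 2 * 2 by norm_num, mul_pow]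
    field_simp
  · simp

/-! ### The Boolean ideal with degree bounds -/

/-- Combinations of the polynomials `X x ^ 2 - X x` in which every term has degree at most `D`. -/
noncomputable def boolIdeal (σ : Type*) (D : ℕ) : Submodule ℝ (MvPolynomial σ ℝ) :=
  Submodule.span ℝ {p | ∃ (x : σ) (h : MvPolynomial σ ℝ), p = h * (X x ^ 2 - X x) ∧
    p.totalDegree ≤ D}

lemma boolIdeal_exists [Fintype σ] {D : ℕ} {p : MvPolynomial σ ℝ}
    (hp : p ∈ boolIdeal σ D) : ∃ lam : σ → MvPolynomial σ ℝ,
      p = ∑ x, lam x * (X x ^ 2 - X x) ∧ ∀ x, (lam x * (X x ^ 2 - X x)).totalDegree ≤ D := by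
  classical
  unfold boolIdeal at hp
  induction hp using Submodule.span_induction with
  | mem p hp =>
    obtain ⟨x, h, rfl, hd⟩ := hp
    refine ⟨fun y => if y = x then h else 0, by simp, fun y => ?_⟩
    by_cases hy : y = x
    · subst hy; simpa using hd
    · simp [hy]
  | zero => exact ⟨0, by simp, by simp⟩
  | add p q _ _ h1 h2 =>
    obtain ⟨l1, rfl, d1⟩ := h1
    obtain ⟨l2, rfl, d2⟩ := h2
    refine ⟨l1 + l2, by simp [add_mul, Finset.sum_add_distrib], fun x => ?_⟩
    rw [Pi.add_apply, add_mul]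
    exact (totalDegree_add _ _).trans (max_le (d1 x) (d2 x))
  | smul c p _ h1 =>
    obtain ⟨l1, rfl, d1⟩ := h1
    refine ⟨c • l1, by simp [Finset.smul_sum], fun x => ?_⟩
    rw [Pi.smul_apply, smul_mul_assoc]
    exact deg_smul _ (d1 x)

/-- Telescoping `X ^ (m + 1) - X` into multiples of `X ^ 2 - X` without exceeding degree `D`. -/
lemma boolIdeal_pow {D a : ℕ} (x : σ) {q : MvPolynomial σ ℝ} (hq : q.totalDegree ≤ a) (m : ℕ)
    (h : a + (m + 1) ≤ D) : q * (X x ^ (m + 1) - X x) ∈ boolIdeal σ D := by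
  induction m with
  | zero => simp
  | succ m ih =>
    have h1 := ih (by omega)
    have h2 : q * X x ^ m * (X x ^ 2 - X x) ∈ boolIdeal σ D := by
      refine Submodule.subset_span ⟨x, _, rfl, ?_⟩
      have t1 := totalDegree_mul (q * X x ^ m) (X x ^ 2 - X x)
      have t2 := totalDegree_mul q (X x ^ m)
      have t3 := totalDegree_X_pow (R := ℝ) x m
      have t4 := totalDegree_sub (X x ^ 2) (X x : MvPolynomial σ ℝ)
      have t5 := totalDegree_X_pow (R := ℝ) x 2
      have t6 := totalDegree_X (R := ℝ) x
      rw [t5, t6] at t4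
      simp at t4
      omega
    convert add_mem h1 h2 using 1
    ring

/-- Modulo the Boolean ideal, 0/1 multiples of variables may be replaced by their powers. -/
lemma boolIdeal_prod (k : ℕ) (x y : σ) {a b : ℝ} (ha : a = 0 ∨ a = 1) (hb : b = 0 ∨ b = 1) :
    (a • X x) * (b • X y) - (a • X x) ^ (2 * (k + 1)) * (b • X y) ^ (2 * (k + 1))
      ∈ boolIdeal σ (4 * (k + 1)) := by
  rcases ha with rfl | rfl
  · simp
  rcases hb with rfl | rfl
  · simp
  have h1 := boolIdeal_pow (D := 4 * (k + 1)) (a := 2 * (k + 1)) x (q := X y ^ (2 * (k + 1)))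
    (by rw [totalDegree_X_pow]) (2 * k + 1) (by omega)
  have h2 := boolIdeal_pow (D := 4 * (k + 1)) (a := 1) y (q := X x)
    (by rw [totalDegree_X]) (2 * k + 1) (by omega)
  convert neg_mem (add_mem h1 h2) using 1
  simp only [one_smul]
  ring

/-! ### Lower bound for the comparison operator -/

/-- The average `2⁻ⁿ ∑ f_x`. -/
noncomputable def avg (n : ℕ) : MvPolynomial (Fin n → Bool) ℝ := ((2 : ℝ) ^ n)⁻¹ • ∑ x, X x

/-- The parity character. -/
noncomputable def par {n : ℕ} (x : Fin n → Bool) : ℝ := ∏ i, sgn (x i)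

lemma par_eq {n : ℕ} (x : Fin n → Bool) : par x = 1 ∨ par x = -1 := by
  rw [← sq_eq_one_iff, par, ← Finset.prod_pow]
  exact Finset.prod_eq_one fun i _ => by rw [sq, sgn_mul_sgn, if_pos rfl]

/-- Negation of all bits. -/
def flipAll (n : ℕ) : (Fin n → Bool) ≃ (Fin n → Bool) := Equiv.piCongrRight fun _ => Equiv.boolNot

lemma flipAll_apply {n : ℕ} (x : Fin n → Bool) (i : Fin n) : flipAll n x i = !(x i) := rfl

/-- The restriction of the formal function `x ↦ f_x` to the points of parity `s`. -/
noncomputable def half {n : ℕ} (s : ℝ) (x : Fin n → Bool) : MvPolynomial (Fin n → Bool) ℝ :=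
  ((1 + s * par x) / 2) • X x

lemma half_deg {n : ℕ} (s : ℝ) (x : Fin n → Bool) : (half s x).totalDegree ≤ 1 :=
  deg_smul _ (by rw [totalDegree_X])

/-- The noise operator with negative correlation is bounded below on each parity class. -/
lemma half_bound {n : ℕ} (k : ℕ) {η : ℝ} (hη : 1 ≤ η * (2 * (k + 1))) (hη0 : 0 ≤ η) (hη1 : η ≤ 1)
    {s : ℝ} (hs : s = 1 ∨ s = -1) :
    ∃ S ∈ sosCone (Fin n → Bool) (4 * (k + 1)), ∃ J ∈ boolIdeal (Fin n → Bool) (4 * (k + 1)),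
      ∑ x : Fin n → Bool, ∑ y : Fin n → Bool,
        (∏ i, wt η (x i) (!(y i))) • (half s x * half s y)
        = S + J + (((2 : ℝ) ^ n)⁻¹ • ∑ x, half s x) ^ (4 * (k + 1)) := by
  have h1 := hypercontractive k hη hη0 hη1 (half s) (fun y => half s (flipAll n y)) (half_deg s)
    (fun y => half_deg s _)
  have hr : ∀ x : Fin n → Bool, ∑ y : Fin n → Bool, (∏ i, wt η (x i) (y i)) •
      (half s x ^ (2 * (k + 1)) * half s (flipAll n y) ^ (2 * (k + 1)))
      = ∑ y : Fin n → Bool, (∏ i, wt η (x i) (!(y i))) •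
      (half s x ^ (2 * (k + 1)) * half s y ^ (2 * (k + 1))) := by
    intro x
    rw [← (flipAll n).sum_comp]
    refine Finset.sum_congr rfl fun y _ => ?_
    have : flipAll n (flipAll n y) = y := by ext i; simp [flipAll_apply]
    simp only [this, flipAll_apply]
  rw [Finset.sum_congr rfl fun x _ => hr x, (flipAll n).sum_comp (half s)] at h1
  have h01 : ∀ x : Fin n → Bool, (1 + s * par x) / 2 = 0 ∨ (1 + s * par x) / 2 = 1 := by
    intro x
    rcases hs with rfl | rfl <;> rcases par_eq x with h | h <;> rw [h] <;> norm_num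
  have h2 : ∑ x : Fin n → Bool, ∑ y : Fin n → Bool, (∏ i, wt η (x i) (!(y i))) •
      (half s x * half s y - half s x ^ (2 * (k + 1)) * half s y ^ (2 * (k + 1)))
      ∈ boolIdeal (Fin n → Bool) (4 * (k + 1)) :=
    sum_mem fun x _ => sum_mem fun y _ => Submodule.smul_mem _ _
      (boolIdeal_prod k x y (h01 x) (h01 y))
  refine ⟨_, h1, _, h2, ?_⟩
  simp only [smul_sub, Finset.sum_sub_distrib]
  ring

/-- The operator with eigenvalues `θ ^ |S| + θ ^ (n - |S|)`, `θ = η - 1 ≤ 0`, acts separately on the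
two parity classes, as twice the noise operator on each. -/
lemma tau_quad {n : ℕ} (η : ℝ) :
    ∑ S : Finset (Fin n), ((η - 1) ^ S.card + (η - 1) ^ (n - S.card)) • (four S) ^ 2
      = 2 * (∑ x : Fin n → Bool, ∑ y : Fin n → Bool,
        (∏ i, wt η (x i) (!(y i))) • (half 1 x * half 1 y)
        + ∑ x : Fin n → Bool, ∑ y : Fin n → Bool,
        (∏ i, wt η (x i) (!(y i))) • (half (-1) x * half (-1) y)) := by
  rw [four_quad, ← Finset.sum_add_distrib, Finset.smul_sum, Finset.mul_sum]
  refine Finset.sum_congr rfl fun x _ => ?_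
  rw [← Finset.sum_add_distrib, Finset.smul_sum, Finset.mul_sum]
  refine Finset.sum_congr rfl fun y _ => ?_
  have h1 := kernel_expand_real (η - 1) 1 x y
  have h2 := kernel_expand_real 1 (η - 1) x y
  simp only [one_pow, mul_one, one_mul] at h1 h2
  have hw : ∏ i, (sgn (x i) * sgn (y i) * (η - 1) + 1) = 4 ^ n * ∏ i, wt η (x i) (!(y i)) := by
    have : (4 : ℝ) ^ n = ∏ _i : Fin n, (4 : ℝ) := by simp
    rw [this, ← Finset.prod_mul_distrib]
    refine Finset.prod_congr rfl fun i _ => ?_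
    cases x i <;> cases y i <;> simp [sgn, wt] <;> ring
  have hp : ∏ i, (sgn (x i) * sgn (y i) + (η - 1))
      = par x * par y * ∏ i, (sgn (x i) * sgn (y i) * (η - 1) + 1) := by
    rw [par, par, ← Finset.prod_mul_distrib, ← Finset.prod_mul_distrib]
    refine Finset.prod_congr rfl fun i _ => ?_
    rw [sgn_mul_sgn]
    split_ifs <;> ring
  rw [Finset.sum_congr rfl fun S _ => add_mul _ _ _, Finset.sum_add_distrib, h1, h2, hp, hw]
  generalize ∏ i, wt η (x i) (!(y i)) = P
  rw [smul_smul, show ((4 : ℝ) ^ n)⁻¹ * (4 ^ n * P + par x * par y * (4 ^ n * P))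
    = (1 + par x * par y) * P by field_simp]
  unfold half
  algebra

lemma half_sum (n : ℕ) : ((2 : ℝ) ^ n)⁻¹ • ∑ x, half (n := n) 1 x
    + ((2 : ℝ) ^ n)⁻¹ • ∑ x, half (n := n) (-1) x = avg n := by
  rw [← smul_add, ← Finset.sum_add_distrib, avg]
  congr 1
  refine Finset.sum_congr rfl fun x _ => ?_
  rw [half, half, ← add_smul, show (1 + 1 * par x) / 2 + (1 + -1 * par x) / 2 = 1 by ring, one_smul]

lemma avg_deg (n : ℕ) : (avg n).totalDegree ≤ 1 :=
  deg_smul _ (totalDegree_finsetSum_le fun x _ => by rw [totalDegree_X])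

/-- Lower bound for the quadratic form of the comparison operator by a power of the average. With
`A₁`, `A₂` the averages over the two parity classes, it is at least
`2 * (A₁ ^ p + A₂ ^ p) ≥ 4 * ((A₁ + A₂) / 2) ^ p` for `p = 4 * (k + 1)`. -/
lemma tau_bound {n : ℕ} (k : ℕ) {η : ℝ} (hη : 1 ≤ η * (2 * (k + 1))) (hη0 : 0 ≤ η)
    (hη1 : η ≤ 1) :
    ∃ S ∈ sosCone (Fin n → Bool) (4 * (k + 1)), ∃ J ∈ boolIdeal (Fin n → Bool) (4 * (k + 1)),
      ∑ S : Finset (Fin n), ((η - 1) ^ S.card + (η - 1) ^ (n - S.card)) • (four S) ^ 2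
        = S + J + (4 * (1 / 2) ^ (4 * (k + 1)) : ℝ) • avg n ^ (4 * (k + 1)) := by
  obtain ⟨S1, hS1, J1, hJ1, e1⟩ := half_bound (n := n) k hη hη0 hη1 (s := 1) (Or.inl rfl)
  obtain ⟨S2, hS2, J2, hJ2, e2⟩ := half_bound (n := n) k hη hη0 hη1 (s := -1) (Or.inr rfl)
  have hsum := half_sum n
  have hd : ∀ s : ℝ, (((2 : ℝ) ^ n)⁻¹ • ∑ x, half (n := n) s x).totalDegree ≤ 1 := fun s =>
    deg_smul _ (totalDegree_finsetSum_le fun x _ => half_deg s x)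
  have hd1 := hd 1
  have hd2 := hd (-1)
  rw [tau_quad, e1, e2]
  generalize ((2 : ℝ) ^ n)⁻¹ • ∑ x, half (n := n) 1 x = A1 at *
  generalize ((2 : ℝ) ^ n)⁻¹ • ∑ x, half (n := n) (-1) x = A2 at *
  have hJ := jensen (m := (1 / 2 : ℝ) • avg n) (δ := (1 / 2 : ℝ) • (A1 - A2)) (e := 1)
    (deg_smul _ (avg_deg n)) (deg_smul _ ((totalDegree_sub _ _).trans (max_le hd1 hd2)))
    (2 * k + 1)
  rw [show 2 * (2 * k + 1 + 1) = 4 * (k + 1) by ring, ← hsum,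
    show (1 / 2 : ℝ) • (A1 + A2) + (1 / 2 : ℝ) • (A1 - A2) = A1 by module,
    show (1 / 2 : ℝ) • (A1 + A2) - (1 / 2 : ℝ) • (A1 - A2) = A2 by module, hsum, mul_one,
    smul_pow] at hJ
  refine ⟨_, add_mem (add_mem (add_mem hS1 hS1) (add_mem hS2 hS2))
    (sos_smul (c := 4) (by norm_num) hJ), _, add_mem (add_mem hJ1 hJ1) (add_mem hJ2 hJ2), ?_⟩
  generalize avg n ^ (4 * (k + 1)) = Z
  generalize A1 ^ (4 * (k + 1)) = Z1
  generalize A2 ^ (4 * (k + 1)) = Z2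
  algebra

/-! ### Krawtchouk numbers -/

lemma kraw_symm {n d k : ℕ} (hd : Even d) (hk : k ≤ n) : kraw n d (n - k) = kraw n d k := by
  have h : (((1 : Polynomial ℝ) - Polynomial.X) ^ k * (1 + Polynomial.X) ^ (n - k)).comp
      (-Polynomial.X) = (1 - Polynomial.X) ^ (n - k) * (1 + Polynomial.X) ^ (n - (n - k)) := by
    rw [Nat.sub_sub_self hk]
    simp only [Polynomial.mul_comp, Polynomial.pow_comp, Polynomial.sub_comp, Polynomial.add_comp,
      Polynomial.one_comp, Polynomial.X_comp]
    ring
  rw [kraw, kraw, ← h,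
    show (-Polynomial.X : Polynomial ℝ) = Polynomial.C (-1) * Polynomial.X by simp,
    Polynomial.comp_C_mul_X_coeff, hd.neg_one_pow, mul_one]

lemma kraw_zero (n d : ℕ) : kraw n d 0 = n.choose d := by
  simp [kraw, Polynomial.coeff_one_add_X_pow]

/-- The three-term recurrence in `k`; the last term is `0` when `k = 0`. -/
lemma kraw_rec {n d k : ℕ} (hk : k < n) :
    ((n : ℝ) - k) * kraw n d (k + 1) = (n - 2 * d) * kraw n d k - k * kraw n d (k - 1) := by
  have hG : ∀ G : Polynomial ℝ, (Polynomial.X * Polynomial.derivative G).coeff d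
      = d * G.coeff d := by
    intro G
    cases d with
    | zero => simp
    | succ d => rw [Polynomial.coeff_X_mul, Polynomial.coeff_derivative]; push_cast; ring
  have key : Polynomial.C ((n : ℝ) - k) * ((1 - Polynomial.X) ^ (k + 1)
        * (1 + Polynomial.X) ^ (n - (k + 1)))
      = Polynomial.C (n : ℝ) * ((1 - Polynomial.X) ^ k * (1 + Polynomial.X) ^ (n - k))
        - Polynomial.C (2 : ℝ) * (Polynomial.X * Polynomial.derivative
          ((1 - Polynomial.X) ^ k * (1 + Polynomial.X) ^ (n - k)))
        - Polynomial.C (k : ℝ) * ((1 - Polynomial.X) ^ (k - 1)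
          * (1 + Polynomial.X) ^ (n - (k - 1))) := by
    rw [show Polynomial.C (2 : ℝ) = 2 from map_ofNat _ 2]
    obtain ⟨j, rfl⟩ := Nat.exists_eq_add_of_lt hk
    cases k with
    | zero =>
      simp [Polynomial.derivative_pow]
      ring
    | succ k =>
      rw [show k + 1 + j + 1 - (k + 1 + 1) = j by omega,
        show k + 1 + j + 1 - (k + 1) = j + 1 by omega,
        show k + 1 + j + 1 - (k + 1 - 1) = j + 2 by omega, show k + 1 - 1 = k by omega]
      simp [Polynomial.derivative_pow]
      ring
  have h := congrArg (fun p : Polynomial ℝ => p.coeff d) key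
  simp only [Polynomial.coeff_sub, Polynomial.coeff_C_mul, hG] at h
  unfold kraw
  linear_combination h

/-- Krawtchouk numbers are close to a geometric sequence in the low range. -/
lemma kraw_low {n d : ℕ} (hdn : d < n) (hd : n ≤ 2 * d) (k : ℕ) (hk : 2 * k ≤ n - d) :
    |kraw n d k / n.choose d - (1 - 2 * d / n : ℝ) ^ k| ≤ 2 / ((n : ℝ) - d) := by
  have hn : (0 : ℝ) < n := by exact_mod_cast (by omega : 0 < n)
  have hdn' : (d : ℝ) + 1 ≤ n := by exact_mod_cast hdn
  have hd' : (n : ℝ) ≤ 2 * d := by exact_mod_cast hd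
  have hN : (0 : ℝ) < n.choose d := by exact_mod_cast Nat.choose_pos hdn.le
  set θ : ℝ := 1 - 2 * d / n with hθ
  set κ : ℕ → ℝ := fun k => kraw n d k / n.choose d with hκ
  set E : ℝ := 2 / ((n : ℝ) - d) with hE
  have hE0 : 0 ≤ E := by apply div_nonneg <;> linarith
  have hnθ : (n : ℝ) - 2 * d = n * θ := by rw [hθ]; field_simp
  have hθ0 : θ ≤ 0 := by nlinarith
  have hθ1 : -1 ≤ θ := by nlinarith
  have hrec : ∀ j : ℕ, j < n → ((n : ℝ) - j) * κ (j + 1) = n * θ * κ j - j * κ (j - 1) := by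
    intro j hj
    have := kraw_rec (d := d) hj
    simp only [hκ]
    rw [← hnθ]
    field_simp
    linarith
  -- the defect of the geometric sequence in the recurrence is at most `2`
  have hsrc : ∀ j : ℕ, |(j : ℝ) * θ ^ (j - 1) * (1 - θ ^ 2)| ≤ 2 := by
    intro j
    have hgeom : (j : ℝ) * |θ| ^ (j - 1) * (1 - |θ|) ≤ 1 := by
      have h0 : 0 ≤ |θ| := abs_nonneg _
      have h1 : |θ| ≤ 1 := abs_le.2 ⟨hθ1, by linarith⟩
      have hs : (j : ℝ) * |θ| ^ (j - 1) ≤ ∑ i ∈ Finset.range j, |θ| ^ i := by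
        have : ∑ i ∈ Finset.range j, |θ| ^ (j - 1) ≤ ∑ i ∈ Finset.range j, |θ| ^ i :=
          Finset.sum_le_sum fun i hi => pow_le_pow_of_le_one h0 h1
            (by have := Finset.mem_range.1 hi; omega)
        simpa using this
      calc _ ≤ (∑ i ∈ Finset.range j, |θ| ^ i) * (1 - |θ|) :=
            mul_le_mul_of_nonneg_right hs (by linarith)
        _ = 1 - |θ| ^ j := geom_sum_mul_neg _ _
        _ ≤ 1 := by have := pow_nonneg h0 j; linarith
    have h1 : |θ| ≤ 1 := abs_le.2 ⟨hθ1, by linarith⟩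
    have hab : |1 - θ ^ 2| = (1 - |θ|) * (1 + |θ|) := by
      rw [← sq_abs θ, abs_of_nonneg (by nlinarith [abs_nonneg θ])]; ring
    rw [abs_mul, abs_mul, abs_pow, Nat.abs_cast, hab]
    have h0 := abs_nonneg θ
    calc (j : ℝ) * |θ| ^ (j - 1) * ((1 - |θ|) * (1 + |θ|))
        = ((j : ℝ) * |θ| ^ (j - 1) * (1 - |θ|)) * (1 + |θ|) := by ring
      _ ≤ 1 * 2 := by gcongr; linarith
      _ = 2 := by norm_num
  have hstep : ∀ j : ℕ, 2 * j ≤ n - d → |κ j - θ ^ j| ≤ E → |κ (j - 1) - θ ^ (j - 1)| ≤ E →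
      |κ (j + 1) - θ ^ (j + 1)| ≤ E := by
    intro j hj h1 h2
    have hjn : j < n := by omega
    have hj' : 2 * (j : ℝ) ≤ n - d := by
      have : 2 * j + d ≤ n := by omega
      have : (2 * (j : ℝ)) + d ≤ n := by exact_mod_cast this
      linarith
    have hpos : 0 < (n : ℝ) - j := by
      have : (j : ℝ) < n := by exact_mod_cast hjn
      linarith
    have hid : ((n : ℝ) - j) * (κ (j + 1) - θ ^ (j + 1))
        = n * θ * (κ j - θ ^ j) - j * (κ (j - 1) - θ ^ (j - 1))
          - j * θ ^ (j - 1) * (1 - θ ^ 2) := by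
      rw [mul_sub, hrec j hjn]
      cases j with
      | zero => simp; ring
      | succ j => simp only [Nat.add_sub_cancel]; push_cast; ring
    have hb : |((n : ℝ) - j) * (κ (j + 1) - θ ^ (j + 1))| ≤ n * |θ| * E + j * E + 2 := by
      rw [hid]
      refine (abs_sub _ _).trans (add_le_add ((abs_sub _ _).trans (add_le_add ?_ ?_)) (hsrc j))
      · rw [abs_mul, abs_mul, Nat.abs_cast]; gcongr
      · rw [abs_mul, Nat.abs_cast]; gcongr
    rw [abs_mul, abs_of_pos hpos] at hb
    have hE2 : E * (n - d) = 2 := by rw [hE]; field_simp [show (n : ℝ) - d ≠ 0 by linarith]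
    rw [abs_of_nonpos hθ0, show (n : ℝ) * -θ = 2 * d - n by linarith] at hb
    refine le_of_mul_le_mul_left (hb.trans ?_) hpos
    nlinarith [mul_le_mul_of_nonneg_left hj' hE0]
  have h00 : κ 0 - θ ^ 0 = 0 := by simp [hκ, kraw_zero, hN.ne']
  have main : ∀ j : ℕ, 2 * j ≤ n - d → |κ j - θ ^ j| ≤ E ∧ |κ (j - 1) - θ ^ (j - 1)| ≤ E := by
    intro j
    induction j with
    | zero =>
      have h0 : |κ 0 - θ ^ 0| ≤ E := by rw [h00, abs_zero]; exact hE0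
      exact fun _ => ⟨h0, h0⟩
    | succ j ih =>
      intro hj
      obtain ⟨h1, h2⟩ := ih (by omega)
      exact ⟨hstep j (by omega) h1 h2, h1⟩
  exact (main k hk).1

/-- Splitting off a factor `(1 - X) (1 + X)` of the generating function. -/
lemma kraw_pair {n d k : ℕ} (hk : k + 1 ≤ n + 1) :
    kraw (n + 2) (d + 2) (k + 1) = kraw n (d + 2) k - kraw n d k := by
  have key : ((1 : Polynomial ℝ) - Polynomial.X) ^ (k + 1)
        * (1 + Polynomial.X) ^ (n + 2 - (k + 1))
      = (1 - Polynomial.X) ^ k * (1 + Polynomial.X) ^ (n - k)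
        - (1 - Polynomial.X) ^ k * (1 + Polynomial.X) ^ (n - k) * Polynomial.X ^ 2 := by
    rw [show n + 2 - (k + 1) = n - k + 1 by omega]
    ring
  have h := congrArg (fun p : Polynomial ℝ => p.coeff (d + 2)) key
  simp only [Polynomial.coeff_sub, Polynomial.coeff_mul_X_pow] at h
  exact h

lemma choose_mid {n d : ℕ} (hd : d ≤ n) : ((n : ℝ) + 2) * (n + 1) * (n.choose (d + 1))
    = (d + 2) * (n - d) * ((n + 2).choose (d + 2)) := by
  have h1 : (n + 2) * (n + 1).choose (d + 1) = (n + 2).choose (d + 2) * (d + 2) :=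
    Nat.add_one_mul_choose_eq (n + 1) (d + 1)
  have h2 : n.choose (d + 1) * (n + 1) = (n + 1).choose (d + 1) * (n + 1 - (d + 1)) :=
    Nat.choose_mul_succ_eq n (d + 1)
  rw [show n + 1 - (d + 1) = n - d by omega] at h2
  have h1' : ((n : ℝ) + 2) * (n + 1).choose (d + 1) = (n + 2).choose (d + 2) * (d + 2) := by
    exact_mod_cast h1
  have h2' : (n.choose (d + 1) : ℝ) * (n + 1) = (n + 1).choose (d + 1) * (n - d) := by
    rw [← Nat.cast_sub hd]; exact_mod_cast h2
  linear_combination (n + 2) * h2' + (n - d) * h1'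

/-- Decay of the Krawtchouk numbers away from the ends: each of `m` disjoint pairs of coordinates
contributes a factor `1 - s`, where `s` bounds from below the chance that a random `d`-set splits
the pair. -/
lemma kraw_mid {A B N s : ℝ} (hs0 : 0 ≤ s) (hs1 : s ≤ 1) (hA : 0 ≤ A) (hB : 0 ≤ B)
    (hs : s * N ^ 2 ≤ 2 * A * B) (m : ℕ) : ∀ n d k : ℕ, d ≤ n → m ≤ k → k + m ≤ n →
    A + 2 * m ≤ d → B + 2 * m ≤ n - d → (n : ℝ) ≤ N →
    |kraw n d k| ≤ (1 - s) ^ m * n.choose d := by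
  induction m with
  | zero =>
    intro n d k hdn _ hk _ _ _
    -- every coefficient is bounded by that of `(1 + X) ^ n`
    have : ∀ k j d : ℕ, |((((1 : Polynomial ℝ) - Polynomial.X) ^ k
        * (1 + Polynomial.X) ^ j).coeff d)| ≤ (((k + j).choose d : ℕ) : ℝ) := by
      intro k
      induction k with
      | zero => intro j d; simp [Polynomial.coeff_one_add_X_pow]
      | succ k ih =>
        intro j d
        rw [show ((1 : Polynomial ℝ) - Polynomial.X) ^ (k + 1) * (1 + Polynomial.X) ^ j
          = (1 - Polynomial.X) ^ k * (1 + Polynomial.X) ^ j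
            - Polynomial.X * ((1 - Polynomial.X) ^ k * (1 + Polynomial.X) ^ j) by ring]
        cases d with
        | zero => simpa using ih j 0
        | succ d =>
          rw [Polynomial.coeff_sub, Polynomial.coeff_X_mul,
            show k + 1 + j = k + j + 1 by ring, Nat.choose_succ_succ, add_comm (Nat.choose _ _)]
          push_cast
          exact (abs_sub _ _).trans (add_le_add (ih j (d + 1)) (ih j d))
    have h := this k (n - k) d
    rw [show k + (n - k) = n by omega] at h
    simpa [kraw] using h
  | succ m ih =>
    intro n d k hdn hmk hkm hAd hBd hnN
    push_cast at hAd hBd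
    have hm0 : (0 : ℝ) ≤ m := Nat.cast_nonneg m
    obtain ⟨d, rfl⟩ : ∃ d', d = d' + 2 := by
      have : (2 : ℝ) ≤ d := by linarith
      have : 2 ≤ d := by exact_mod_cast this
      exact ⟨d - 2, by omega⟩
    obtain ⟨n, rfl⟩ : ∃ n', n = n' + 2 := ⟨n - 2, by omega⟩
    obtain ⟨k, rfl⟩ : ∃ k', k = k' + 1 := ⟨k - 1, by omega⟩
    push_cast at hAd hBd hnN
    have hdn2 : d + 2 ≤ n := by
      have : (d : ℝ) + 2 ≤ n := by linarith
      exact_mod_cast this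
    have i1 := ih n (d + 2) k hdn2 (by omega) (by omega) (by push_cast; linarith)
      (by push_cast; linarith) (by linarith)
    have i2 := ih n d k (by omega) (by omega) (by omega) (by linarith) (by linarith) (by linarith)
    have hmid := choose_mid (n := n) (d := d) (by omega)
    have hpas : ((n + 2).choose (d + 2) : ℝ)
        = n.choose d + 2 * n.choose (d + 1) + n.choose (d + 2) := by
      have : (n + 2).choose (d + 2) = n.choose d + 2 * n.choose (d + 1) + n.choose (d + 2) := by
        rw [Nat.choose_succ_succ (n + 1), Nat.choose_succ_succ n, Nat.choose_succ_succ n]; ring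
      exact_mod_cast this
    rw [kraw_pair (by omega)]
    have hN : s * ((n + 2).choose (d + 2) : ℝ) ≤ 2 * n.choose (d + 1) := by
      have hc : (0 : ℝ) ≤ (n + 2).choose (d + 2) := Nat.cast_nonneg _
      have hn0 : (0 : ℝ) ≤ n := Nat.cast_nonneg _
      have hpos : (0 : ℝ) < (n + 2) * (n + 1) := by positivity
      have hle : s * ((n + 2) * (n + 1)) ≤ 2 * ((d + 2) * (n - d)) := by
        calc s * (((n : ℝ) + 2) * (n + 1)) ≤ s * N ^ 2 := by
              apply mul_le_mul_of_nonneg_left _ hs0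
              nlinarith
          _ ≤ 2 * (A * B) := by linarith
          _ ≤ 2 * ((d + 2) * (n - d)) := by
              have : A * B ≤ (d + 2) * (n - d) := by
                apply mul_le_mul <;> linarith
              linarith
      refine le_of_mul_le_mul_left ?_ hpos
      calc ((n : ℝ) + 2) * (n + 1) * (s * (n + 2).choose (d + 2))
          = s * ((n + 2) * (n + 1)) * (n + 2).choose (d + 2) := by ring
        _ ≤ 2 * ((d + 2) * (n - d)) * (n + 2).choose (d + 2) := by gcongr
        _ = (n + 2) * (n + 1) * (2 * n.choose (d + 1)) := by linear_combination -2 * hmid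
    calc |kraw n (d + 2) k - kraw n d k| ≤ |kraw n (d + 2) k| + |kraw n d k| := abs_sub _ _
      _ ≤ (1 - s) ^ m * n.choose (d + 2) + (1 - s) ^ m * n.choose d := add_le_add i1 i2
      _ = (1 - s) ^ m * ((n + 2).choose (d + 2) - 2 * n.choose (d + 1)) := by rw [hpas]; ring
      _ ≤ (1 - s) ^ m * ((1 - s) * (n + 2).choose (d + 2)) := by
          apply mul_le_mul_of_nonneg_left _ (pow_nonneg (by linarith) m)
          linarith
      _ = _ := by ring

/-! ### Comparison of the two spectra -/

lemma pow_le_inv {s : ℝ} (h0 : 0 ≤ s) (h1 : s ≤ 1) (m : ℕ) : (1 - s) ^ m * (1 + m * s) ≤ 1 := by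
  have hb : 1 + (m : ℝ) * s ≤ (1 + s) ^ m := one_add_mul_le_pow (by linarith) m
  calc (1 - s) ^ m * (1 + m * s) ≤ (1 - s) ^ m * (1 + s) ^ m := by
        apply mul_le_mul_of_nonneg_left hb (pow_nonneg (by linarith) m)
    _ = (1 - s ^ 2) ^ m := by rw [← mul_pow]; ring
    _ ≤ 1 := pow_le_one₀ (by nlinarith) (by nlinarith [sq_nonneg s])

/-- With `|θ| = 1 - 2γ`, powers of `θ` beyond `γ n / 2` are small. -/
lemma theta_pow {γ n θ : ℝ} (hγ0 : 0 < γ) (hγ : γ ≤ 1 / 2) (hn : 0 < n) (hθ : θ = 2 * γ - 1) {j : ℕ}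
    (hj : γ * n ≤ 2 * j) : |θ ^ j| ≤ 1 / (γ ^ 2 * n) := by
  have h := pow_le_inv (s := 2 * γ) (by linarith) (by linarith) j
  have h2 : |θ| = 1 - 2 * γ := by rw [hθ, abs_of_nonpos (by linarith)]; ring
  rw [abs_pow, h2, le_div_iff₀ (by positivity)]
  refine le_trans (mul_le_mul_of_nonneg_left ?_ (pow_nonneg (by linarith) j)) h
  nlinarith

/-- The half range `2 * k ≤ n` of `eig`. -/
lemma eig_half {n d k : ℕ} {γ : ℝ} (hγ0 : 0 < γ) (hγ : γ ≤ 1 / 2) (hn : 0 < n)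
    (hd : (d : ℝ) = (1 - γ) * n) (hk : 2 * k ≤ n) :
    (2 * γ - 1) ^ k + (2 * γ - 1) ^ (n - k) - kraw n d k / n.choose d ≤ 34 / (γ ^ 2 * n) := by
  have hn' : (0 : ℝ) < n := by exact_mod_cast hn
  have hg : (n : ℝ) - d = γ * n := by rw [hd]; ring
  have hgn : 0 < γ * n := by positivity
  have hdn : d < n := by
    have : (d : ℝ) < n := by linarith
    exact_mod_cast this
  have hd2 : n ≤ 2 * d := by
    have : (n : ℝ) ≤ 2 * d := by nlinarith
    exact_mod_cast this
  have hN : (0 : ℝ) < n.choose d := by exact_mod_cast Nat.choose_pos hdn.le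
  have hk' : 2 * (k : ℝ) ≤ n := by exact_mod_cast hk
  have hnk : ((n - k : ℕ) : ℝ) = n - k := Nat.cast_sub (by omega)
  set e : ℝ := 1 / (γ ^ 2 * n) with he
  have he0 : 0 < e := by positivity
  have he34 : 34 / (γ ^ 2 * n) = 34 * e := by rw [he]; ring
  have h1 : |(2 * γ - 1) ^ (n - k)| ≤ e :=
    theta_pow hγ0 hγ hn' rfl (by rw [hnk]; nlinarith)
  rw [he34]
  rcases le_or_gt (2 * k) (n - d) with hc | hc
  · have h2 := kraw_low hdn hd2 k hc
    have hθ : (1 - 2 * d / n : ℝ) = 2 * γ - 1 := by rw [hd]; field_simp; ring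
    have h3 : 2 / ((n : ℝ) - d) ≤ e := by
      rw [hg, he, div_le_div_iff₀ hgn (by positivity)]
      nlinarith
    rw [hθ] at h2
    have := (abs_le.1 h2).1
    have := (abs_le.1 h1).2
    linarith
  · have hc' : γ * n ≤ 2 * k := by
      have : n ≤ 2 * k + d := by omega
      have : (n : ℝ) ≤ 2 * k + d := by exact_mod_cast this
      linarith
    have h2 : |(2 * γ - 1) ^ k| ≤ e := theta_pow hγ0 hγ hn' rfl hc'
    obtain ⟨r, rfl⟩ : ∃ r, n = d + r := ⟨n - d, by omega⟩
    have hr : (r : ℝ) = γ * ((d + r : ℕ) : ℝ) := by rw [← hg]; push_cast; ring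
    set m := r / 8 with hm
    have hm1 : 8 * (m : ℝ) ≤ r := by exact_mod_cast (by omega : 8 * m ≤ r)
    have hm2 : (r : ℝ) ≤ 8 * m + 8 := by exact_mod_cast (by omega : r ≤ 8 * m + 8)
    set N : ℝ := ((d + r : ℕ) : ℝ) with hNN
    have hrN : (r : ℝ) ≤ N / 2 := by rw [hr]; nlinarith
    have h3 := kraw_mid (A := N / 4) (B := r / 2) (N := N) (s := γ / 4) (by linarith) (by linarith)
      (by linarith) (by positivity) (by rw [hr]; nlinarith) m (d + r) d k (by omega) (by omega)
      (by omega) (by linarith) (by linarith) le_rfl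
    have h4 := pow_le_inv (s := γ / 4) (by linarith) (by linarith) m
    have h5 : (1 - γ / 4) ^ m ≤ 32 * e := by
      rw [he, mul_one_div, le_div_iff₀ (by positivity)]
      have h6 : γ ^ 2 * N ≤ 32 * (1 + m * (γ / 4)) := by
        nlinarith [mul_le_mul_of_nonneg_left hm2 hγ0.le]
      nlinarith [mul_le_mul_of_nonneg_left h6
        (pow_nonneg (by linarith : (0 : ℝ) ≤ 1 - γ / 4) m)]
    have h7 : |kraw (d + r) d k / (d + r).choose d| ≤ 32 * e := by
      rw [abs_div, abs_of_pos hN, div_le_iff₀ hN]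
      exact h3.trans (mul_le_mul_of_nonneg_right h5 hN.le)
    have := (abs_le.1 h7).1
    have := (abs_le.1 h2).2
    have := (abs_le.1 h1).2
    linarith

/-- The noise operator with eigenvalues `θ ^ k`, symmetrised under `k ↦ n - k`, is dominated by the
distance-`d` averaging operator up to an error `34 / (γ ^ 2 * n)`. -/
lemma eig {n d k : ℕ} {γ : ℝ} (hγ0 : 0 < γ) (hγ : γ ≤ 1 / 2) (hn : 0 < n) (he : Even d)
    (hd : (d : ℝ) = (1 - γ) * n) (hk : k ≤ n) :
    (2 * γ - 1) ^ k + (2 * γ - 1) ^ (n - k) - kraw n d k / n.choose d ≤ 34 / (γ ^ 2 * n) := by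
  rcases le_total (2 * k) n with h | h
  · exact eig_half hγ0 hγ hn hd h
  · have := eig_half (k := n - k) hγ0 hγ hn hd (by omega)
    rwa [kraw_symm he hk, Nat.sub_sub_self hk, add_comm ((2 * γ - 1) ^ (n - k))] at this

/-! ### The certificate -/

/-- The choice of parameters: the exponent is `4 * (k + 1)` with `k + 1 ≈ 1 / (4 * γ)`. -/
lemma exists_exponent {n : ℕ} {γ : ℝ} (hn : 2 ≤ n) (h1 : 1 / Real.log n ≤ γ) (h2 : γ ≤ 1 / 2) :
    0 < γ ∧ ∃ k : ℕ, 1 ≤ 2 * γ * (2 * (k + 1)) ∧ (4 * (k + 1) : ℝ) ≤ 3 / γ ∧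
      34 / (γ ^ 2 * n) <
        4 * (1 / 2) ^ (4 * (k + 1)) * (2000 * (n : ℝ) ^ (-(γ / 10))) ^ (4 * k + 3) := by
  have hn1 : (1 : ℝ) < n := by exact_mod_cast (by omega : 1 < n)
  have hn0 : (0 : ℝ) < n := by linarith
  have hlog : 0 < Real.log n := Real.log_pos hn1
  have hγ : 0 < γ := (one_div_pos.2 hlog).trans_le h1
  obtain ⟨k, hk⟩ : ∃ k, ⌈1 / (4 * γ)⌉₊ = k + 1 :=
    ⟨_, (Nat.succ_pred_eq_of_pos (Nat.ceil_pos.2 (by positivity))).symm⟩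
  have hlo : 1 / (4 * γ) ≤ k + 1 := by
    have := Nat.le_ceil (1 / (4 * γ))
    rw [hk] at this
    exact_mod_cast this
  have hhi : (k : ℝ) + 1 < 1 / (4 * γ) + 1 := by
    have := Nat.ceil_lt_add_one (a := 1 / (4 * γ)) (by positivity)
    rw [hk] at this
    exact_mod_cast this
  have hlo' : 1 ≤ (k + 1) * (4 * γ) := by rwa [div_le_iff₀ (by positivity)] at hlo
  have hhi' : (k : ℝ) * (4 * γ) ≤ 1 := by
    have : (k : ℝ) < 1 / (4 * γ) := by linarith
    rw [lt_div_iff₀ (by positivity)] at this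
    exact this.le
  refine ⟨hγ, k, by linarith, by rw [le_div_iff₀ hγ]; linarith, ?_⟩
  -- both sides are compared with multiples of `n ^ (-1 / 2)`
  have hε : 34 / (γ ^ 2 * n) ≤ 544 * (n : ℝ) ^ (-(1 / 2) : ℝ) := by
    have hl : Real.log n ≤ 4 * (n : ℝ) ^ (1 / 4 : ℝ) := by
      have := Real.log_le_rpow_div hn0.le (show (0 : ℝ) < 1 / 4 by norm_num)
      linarith
    have hg : 1 ≤ γ * (4 * (n : ℝ) ^ (1 / 4 : ℝ)) := by
      rw [div_le_iff₀ hlog] at h1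
      exact h1.trans (mul_le_mul_of_nonneg_left hl hγ.le)
    have hg2 : 1 ≤ γ ^ 2 * (16 * (n : ℝ) ^ (1 / 2 : ℝ)) := by
      have h4 : ((n : ℝ) ^ (1 / 4 : ℝ)) ^ 2 = (n : ℝ) ^ (1 / 2 : ℝ) := by
        rw [← Real.rpow_natCast, ← Real.rpow_mul hn0.le]; norm_num
      rw [← h4]
      nlinarith
    have hs : (n : ℝ) ^ (1 / 2 : ℝ) * (n : ℝ) ^ (1 / 2 : ℝ) = n := by
      rw [← Real.rpow_add hn0]; norm_num
    have hi : (n : ℝ) ^ (-(1 / 2) : ℝ) * (n : ℝ) ^ (1 / 2 : ℝ) = 1 := by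
      rw [← Real.rpow_add hn0]; norm_num
    rw [div_le_iff₀ (by positivity)]
    have he : 544 * (n : ℝ) ^ (-(1 / 2) : ℝ) * (γ ^ 2 * n)
        = 34 * (γ ^ 2 * (16 * (n : ℝ) ^ (1 / 2 : ℝ))) := by
      generalize (n : ℝ) ^ (1 / 2 : ℝ) = s at hs hi ⊢
      generalize (n : ℝ) ^ (-(1 / 2) : ℝ) = t at hi ⊢
      rw [← hs]
      linear_combination 544 * γ ^ 2 * s * hi
    rw [he]
    linarith
  have hr : (n : ℝ) ^ (-(1 / 2) : ℝ) ≤ ((n : ℝ) ^ (-(γ / 10))) ^ (4 * k + 3) := by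
    rw [← Real.rpow_natCast, ← Real.rpow_mul hn0.le]
    apply Real.rpow_le_rpow_of_exponent_le hn1.le
    push_cast
    nlinarith
  have hc : (10 : ℝ) ^ 9 ≤ 4 * (1 / 2) ^ (4 * (k + 1)) * 2000 ^ (4 * k + 3) := by
    calc (10 : ℝ) ^ 9 ≤ 2 * 1000 ^ 3 := by norm_num
      _ ≤ 2 * 1000 ^ (4 * k + 3) := by
          gcongr
          · norm_num
          · omega
      _ = 4 * (1 / 2) ^ (4 * (k + 1)) * 2000 ^ (4 * k + 3) := by
          rw [show (1000 : ℝ) = 1 / 2 * 2000 by norm_num, mul_pow,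
            show 4 * (k + 1) = 4 * k + 3 + 1 by ring, pow_succ (1 / 2 : ℝ)]
          ring
  have hp : 0 < (n : ℝ) ^ (-(1 / 2) : ℝ) := Real.rpow_pos_of_pos hn0 _
  rw [mul_pow, ← mul_assoc]
  calc 34 / (γ ^ 2 * n) ≤ 544 * (n : ℝ) ^ (-(1 / 2) : ℝ) := hε
    _ < 10 ^ 9 * (n : ℝ) ^ (-(1 / 2) : ℝ) := by nlinarith
    _ ≤ _ := mul_le_mul hc hr hp.le (by positivity)

/-- The refutation, for a density threshold `a` at which the spectral error `ε` is dominated by the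
lower bound coming from hypercontractivity. -/
lemma certificate {n d k : ℕ} {γ ε a : ℝ} (hγ0 : 0 < γ) (hγ : γ ≤ 1 / 2) (hn : 0 < n) (he : Even d)
    (hd : (d : ℝ) = (1 - γ) * n) (hk : 1 ≤ 2 * γ * (2 * (k + 1))) (hε : ε = 34 / (γ ^ 2 * n))
    (ha : 0 < a) (hlt : ε < 4 * (1 / 2) ^ (4 * (k + 1)) * a ^ (4 * k + 3)) :
    ∃ σ₀ ∈ sosCone (Fin n → Bool) (4 * (k + 1)), ∃ J ∈ boolIdeal (Fin n → Bool) (4 * (k + 1)),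
      ∃ c₁ c₂ : ℝ, 0 ≤ c₁ ∧ -1 = σ₀ + C c₁ * (avg n - C a) + J
        + ∑ p ∈ Finset.univ.filter (fun p : (Fin n → Bool) × (Fin n → Bool) =>
          hammingDist p.1 p.2 = d), C c₂ * X p.1 * X p.2 := by
  set b : ℝ := 4 * (1 / 2) ^ (4 * (k + 1)) with hb
  have hb0 : 0 < b := by positivity
  obtain ⟨S, hS, J, hJ, hSJ⟩ := tau_bound (n := n) k hk (by linarith) (by linarith)
  set N : ℝ := ((n.choose d : ℕ) : ℝ) with hN
  have hε0 : 0 < ε := by rw [hε]; positivity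
  have hB := bernoulli (avg_deg n) (totalDegree_C a ▸ Nat.zero_le 1) (2 * k + 1)
  set B := avg n ^ (2 * (2 * k + 1 + 1)) - C a ^ (2 * (2 * k + 1 + 1))
    - (2 * ((2 * k + 1 : ℕ) + 1) : ℝ) • (C a ^ (2 * (2 * k + 1) + 1) * (avg n - C a)) with hBdef
  set J₁ : MvPolynomial (Fin n → Bool) ℝ := ((2 : ℝ) ^ n)⁻¹ • ∑ x, (X x ^ 2 - X x) with hJ₁
  have hJ₁m : J₁ ∈ boolIdeal (Fin n → Bool) (4 * (k + 1)) := by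
    refine Submodule.smul_mem _ _ (Submodule.sum_mem _ fun x _ => ?_)
    have := boolIdeal_pow (D := 4 * (k + 1)) (a := 0) x (q := 1) (by simp) 1 (by omega)
    simpa using this
  have hpars : ∑ S, (four (n := n) S) ^ 2 = avg n + J₁ := by
    rw [parseval, avg, hJ₁, ← smul_add, ← Finset.sum_add_distrib]
    simp
  -- the spectral comparison, as a sum of squares of Fourier coefficients
  set P := ∑ S : Finset (Fin n), (ε - ((2 * γ - 1) ^ S.card + (2 * γ - 1) ^ (n - S.card)
    - kraw n d S.card / N)) • (four S) ^ 2 with hP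
  have hPm : P ∈ sosCone (Fin n → Bool) (4 * (k + 1)) := by
    refine AddSubmonoid.sum_mem _ fun S _ => sos_smul ?_ (sos_sq ?_)
    · have := eig (k := S.card) hγ0 hγ hn he hd (by simpa using Finset.card_le_univ S)
      rw [hε]
      linarith
    · have : (four S).totalDegree ≤ 1 := deg_smul _ <| totalDegree_finsetSum_le fun x _ =>
        deg_smul _ (totalDegree_X _).le
      omega
  have hPe : P = ε • (avg n + J₁) - (S + J + b • avg n ^ (4 * (k + 1)))
      + ∑ S : Finset (Fin n), (kraw n d S.card / N) • (four S) ^ 2 := by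
    rw [← hSJ, ← hpars, hP, Finset.smul_sum, ← Finset.sum_sub_distrib, ← Finset.sum_add_distrib]
    refine Finset.sum_congr rfl fun S _ => ?_
    rw [sub_smul, sub_smul]
    abel
  set c₀ : ℝ := a * (b * a ^ (4 * k + 3) - ε) with hc₀
  have hc₀p : 0 < c₀ := mul_pos ha (by linarith)
  set D := ∑ S : Finset (Fin n), (kraw n d S.card / N) • (four S) ^ 2 with hD
  have hid : P + S + b • B + (b * (4 * (k + 1)) * a ^ (4 * k + 3) - ε) • (avg n - C a)
      + (J - ε • J₁) - D = C (-c₀) := by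
    rw [hPe, hBdef, show 2 * (2 * k + 1 + 1) = 4 * (k + 1) by ring,
      show 2 * (2 * k + 1) + 1 = 4 * k + 3 by ring, hc₀]
    simp only [smul_eq_C_mul, map_sub, map_mul, map_add, map_neg, map_pow, Nat.cast_add,
      Nat.cast_mul, map_natCast, map_ofNat, map_one, Nat.cast_ofNat, Nat.cast_one]
    ring
  refine ⟨c₀⁻¹ • (P + S + b • B), sos_smul (by positivity) (AddSubmonoid.add_mem _
    (AddSubmonoid.add_mem _ hPm hS) (sos_smul hb0.le ?_)), c₀⁻¹ • (J - ε • J₁),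
    Submodule.smul_mem _ _ (Submodule.sub_mem _ hJ (Submodule.smul_mem _ _ hJ₁m)),
    c₀⁻¹ * (b * (4 * (k + 1)) * a ^ (4 * k + 3) - ε), -c₀⁻¹ * (((2 : ℝ) ^ n)⁻¹ / N), ?_, ?_⟩
  · exact sos_mono (by omega) hB
  · have h0 : (0 : ℝ) ≤ k := Nat.cast_nonneg k
    have : 0 ≤ b * a ^ (4 * k + 3) := by positivity
    apply mul_nonneg (by positivity)
    nlinarith
  · have hDe : ∑ p ∈ Finset.univ.filter (fun p : (Fin n → Bool) × (Fin n → Bool) =>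
        hammingDist p.1 p.2 = d), C (-c₀⁻¹ * (((2 : ℝ) ^ n)⁻¹ / N)) * X p.1 * X p.2
        = -(c₀⁻¹ • D) := by
      rw [hD, kraw_quad, ← neg_smul, Finset.smul_sum]
      refine Finset.sum_congr rfl fun p _ => ?_
      rw [map_mul, smul_eq_C_mul]
      ring
    rw [hDe, map_mul, mul_assoc, ← smul_eq_C_mul, ← smul_eq_C_mul]
    have h1 : (-1 : MvPolynomial (Fin n → Bool) ℝ) = c₀⁻¹ • C (-c₀) := by
      rw [smul_eq_C_mul, ← map_mul, mul_neg, inv_mul_cancel₀ hc₀p.ne']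
      simp
    rw [h1, ← hid]
    simp only [smul_add, smul_sub]
    abel

end FranklRodl

/-- There are universal constants `C, c > 0` such that for every `n ≥ 2` and
every `1/log n ≤ γ ≤ 1/2` with `d = (1−γ)n` an even integer, there is a degree-`c/γ` SOS
(Positivstellensatz) refutation, in `ℝ[{f_x : x ∈ {−1,1}ⁿ}]`, of the system asserting that
the Frankl–Rödl graph `FRⁿ_γ` has an independent set of fractional size `≥ C n^{−γ/10}`:
`−1 = σ₀ + σ₁ (2^{−n} Σₓ f_x − C n^{−γ/10}) + Σₓ λₓ (f_x² − f_x)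
     + Σ_{dist(x,y)=d} μ_{x,y} f_x f_y`,
with `σ₀, σ₁` sums of squares and every summand of total degree at most `c/γ`. -/
theorem stmt_18 :
    ∃ Cst : ℝ, 0 < Cst ∧ ∃ cst : ℝ, 0 < cst ∧
      ∀ n : ℕ, 2 ≤ n →
      ∀ γ : ℝ, 1 / Real.log n ≤ γ → γ ≤ 1/2 →
      ∀ d : ℕ, Even d → (d : ℝ) = (1 - γ) * n →
      ∃ σ₀ σ₁ : MvPolynomial (Fin n → Bool) ℝ,
      ∃ lam : (Fin n → Bool) → MvPolynomial (Fin n → Bool) ℝ,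
      ∃ mu : (Fin n → Bool) × (Fin n → Bool) → MvPolynomial (Fin n → Bool) ℝ,
        (∃ (m : ℕ) (q : Fin m → MvPolynomial (Fin n → Bool) ℝ), σ₀ = ∑ j, (q j)^2) ∧
        (∃ (m : ℕ) (q : Fin m → MvPolynomial (Fin n → Bool) ℝ), σ₁ = ∑ j, (q j)^2) ∧
        (-1 : MvPolynomial (Fin n → Bool) ℝ)
          = σ₀
            + σ₁ * (C (((2:ℝ)^n)⁻¹) * (∑ x : Fin n → Bool, X x)
                      - C (Cst * (n:ℝ) ^ (-(γ/10))))
            + (∑ x : Fin n → Bool, lam x * ((X x)^2 - X x))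
            + (∑ p ∈ Finset.univ.filter
                (fun p : (Fin n → Bool) × (Fin n → Bool) => hammingDist p.1 p.2 = d),
                mu p * X p.1 * X p.2) ∧
        (σ₀.totalDegree : ℝ) ≤ cst / γ ∧
        (((σ₁ * (C (((2:ℝ)^n)⁻¹) * (∑ x : Fin n → Bool, X x)
              - C (Cst * (n:ℝ) ^ (-(γ/10))))).totalDegree : ℝ) ≤ cst / γ) ∧
        (∀ x : Fin n → Bool, ((lam x * ((X x)^2 - X x)).totalDegree : ℝ) ≤ cst / γ) ∧
        (∀ p : (Fin n → Bool) × (Fin n → Bool), hammingDist p.1 p.2 = d →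
            ((mu p * X p.1 * X p.2).totalDegree : ℝ) ≤ cst / γ) := by
  refine ⟨2000, by norm_num, 3, by norm_num, ?_⟩
  intro n hn γ h1 h2 d he hd
  obtain ⟨hγ, k, hk, hdeg, hlt⟩ := FranklRodl.exists_exponent hn h1 h2
  have ha : 0 < 2000 * (n : ℝ) ^ (-(γ / 10)) :=
    mul_pos (by norm_num) (Real.rpow_pos_of_pos (by exact_mod_cast (by omega : 0 < n)) _)
  obtain ⟨σ₀, hσ₀, J, hJ, c₁, c₂, hc₁, hid⟩ :=
    FranklRodl.certificate hγ h2 (by omega) he hd hk rfl ha hlt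
  obtain ⟨lam, rfl, hlam⟩ := FranklRodl.boolIdeal_exists hJ
  have hD : ∀ e : ℕ, e ≤ 4 * (k + 1) → (e : ℝ) ≤ 3 / γ := fun e h =>
    le_trans (by exact_mod_cast h) hdeg
  rw [FranklRodl.avg, smul_eq_C_mul] at hid
  refine ⟨σ₀, C c₁, lam, fun _ => C c₂, FranklRodl.sos_exists hσ₀,
    ⟨1, fun _ => C (√c₁), by simp [← map_pow, Real.sq_sqrt hc₁]⟩, hid,
    hD _ (FranklRodl.sos_totalDegree hσ₀), hD _ ?_, fun x => hD _ (hlam x), fun p _ => hD _ ?_⟩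
  · have t1 := FranklRodl.avg_deg n
    rw [FranklRodl.avg, smul_eq_C_mul] at t1
    rw [← smul_eq_C_mul]
    refine le_trans (FranklRodl.deg_smul (D := 1) c₁ ?_) (by omega)
    exact (totalDegree_sub _ _).trans (max_le t1 ((totalDegree_C _).trans_le (Nat.zero_le 1)))
  · have t1 := totalDegree_mul (C c₂ * X p.1) (X p.2 : MvPolynomial (Fin n → Bool) ℝ)
    have t2 := totalDegree_mul (C c₂) (X p.1 : MvPolynomial (Fin n → Bool) ℝ)
    rw [totalDegree_X] at t1 t2
    rw [totalDegree_C] at t2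
    dsimp only
    omega
end
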